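/- arXiv:2510.02122 — 2 statements merged into one kernel-verified Lean document; each statement's English description precedes it below -/
import Mathlib

section
/- Let c_1, …, c_8 ∈ ℂ^{16 × 16} be Majorana operators (n = 4), let a_k = (c_{2k−1} + i c_{2k})/2 and n_k = a_k† a_k, and let H = −(1/2)·Σ_{i=1}^{3}(a_i† a_{i+1} + a_{i+1}† a_i) + Σ_{i=1}^{3}(1/4 − n_i n_{i+1}) + (1/2)(n_1 − 1/2) + (n_2 − 1/2) + (n_3 − 1/2) + (1/2)(n_4 − 1/2). Let ψ ∈ ℂ^{16} be any unit eigenvector of H for its largest eigenvalue λ_max(H) = (3 + 2√3)/4, and let Γ ∈ ℝ^{8 × 8} be its covariance matrix, Γ_{jk} = (i/2)·ψ† [c_j, c_k] ψ. Then Γ Γᵀ = s·1 with s = (5 + 2√3)/9. In particular, since s < 1, ψ is not a fermionic Gaussian state. -/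
open Matrix
open scoped ComplexOrder

noncomputable section

/-- A family of `2n` Majorana operators on `ℂ^(2^n)`. -/
def IsMajorana (n : ℕ) (c : Fin (2*n) → Matrix (Fin (2^n)) (Fin (2^n)) ℂ) : Prop :=
  (∀ j, (c j).IsHermitian) ∧
  ∀ j k, c j * c k + c k * c j =
    if j = k then (2 : ℂ) • (1 : Matrix (Fin (2^n)) (Fin (2^n)) ℂ) else 0

/-- The first Majorana operator of mode `j` (i.e. `c_{2j-1}` in 1-based indexing). -/
def majA (n : ℕ) (c : Fin (2*n) → Matrix (Fin (2^n)) (Fin (2^n)) ℂ) (j : Fin n) :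
    Matrix (Fin (2^n)) (Fin (2^n)) ℂ :=
  c ⟨2*j, by have := j.isLt; omega⟩

/-- The second Majorana operator of mode `j` (i.e. `c_{2j}` in 1-based indexing). -/
def majB (n : ℕ) (c : Fin (2*n) → Matrix (Fin (2^n)) (Fin (2^n)) ℂ) (j : Fin n) :
    Matrix (Fin (2^n)) (Fin (2^n)) ℂ :=
  c ⟨2*j+1, by have := j.isLt; omega⟩

/-- Annihilation operator `a_j = (c_{2j-1} + i c_{2j})/2`. -/
def ann (n : ℕ) (c : Fin (2*n) → Matrix (Fin (2^n)) (Fin (2^n)) ℂ) (j : Fin n) :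
    Matrix (Fin (2^n)) (Fin (2^n)) ℂ :=
  ((1:ℂ)/2) • (majA n c j + Complex.I • majB n c j)

/-- Number operator `n_j = a_j† a_j`. -/
def num (n : ℕ) (c : Fin (2*n) → Matrix (Fin (2^n)) (Fin (2^n)) ℂ) (j : Fin n) :
    Matrix (Fin (2^n)) (Fin (2^n)) ℂ :=
  (ann n c j)ᴴ * ann n c j

/-- The fermionic Gaussian state `2^{-n} ∏_j (1 + i λ_j c̃_{2j-1} c̃_{2j})`,
where `c̃_i = Σ_k R_{ik} c_k`. -/
def gaussOf (n : ℕ) (c : Fin (2*n) → Matrix (Fin (2^n)) (Fin (2^n)) ℂ)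
    (lam : Fin n → ℝ) (R : Matrix (Fin (2*n)) (Fin (2*n)) ℝ) :
    Matrix (Fin (2^n)) (Fin (2^n)) ℂ :=
  ((2:ℂ)^n)⁻¹ •
    ((List.finRange n).map (fun j =>
      (1 : Matrix (Fin (2^n)) (Fin (2^n)) ℂ) +
        (Complex.I * (lam j : ℂ)) •
          ((∑ k, ((R ⟨2*j, by have := j.isLt; omega⟩ k : ℝ) : ℂ) • c k) *
           (∑ k, ((R ⟨2*j+1, by have := j.isLt; omega⟩ k : ℝ) : ℂ) • c k)))).prod

/-- A (generally mixed) fermionic Gaussian state. -/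
def IsGaussianState (n : ℕ) (c : Fin (2*n) → Matrix (Fin (2^n)) (Fin (2^n)) ℂ)
    (ρ : Matrix (Fin (2^n)) (Fin (2^n)) ℂ) : Prop :=
  ∃ (lam : Fin n → ℝ) (R : Matrix (Fin (2*n)) (Fin (2*n)) ℝ),
    (∀ j, lam j ∈ Set.Icc (-1:ℝ) 1) ∧ R * Rᵀ = 1 ∧ R.det = 1 ∧ ρ = gaussOf n c lam R

/-- A pure fermionic Gaussian state: all `λ_j = ±1`. -/
def IsPureGaussianState (n : ℕ) (c : Fin (2*n) → Matrix (Fin (2^n)) (Fin (2^n)) ℂ)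
    (ρ : Matrix (Fin (2^n)) (Fin (2^n)) ℂ) : Prop :=
  ∃ (lam : Fin n → ℝ) (R : Matrix (Fin (2*n)) (Fin (2*n)) ℝ),
    (∀ j, lam j = 1 ∨ lam j = -1) ∧ R * Rᵀ = 1 ∧ R.det = 1 ∧ ρ = gaussOf n c lam R

/-- The largest (real) eigenvalue of a Hermitian matrix. -/
def lamMax {m : Type} [Fintype m] [DecidableEq m] (M : Matrix m m ℂ) : ℝ :=
  sSup {x : ℝ | (x : ℂ) ∈ spectrum ℂ M}

/-!
Up to a constant, the Hamiltonian is `P₀ + P₁ + P₂`, where the `Pᵢ` are Temperley–Lieb projections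
with `τ = 1 / 4`, and each `Pᵢ` is a product of two commuting Temperley–Lieb projections with
`τ = 1 / 2`, built from the bond parities of two disjoint open chains of four Majorana operators.

Let `ψ` be an eigenvector of `P₀ + P₁ + P₂` for an eigenvalue `1 + y` with `y ^ 2 = y + 1 / 2`. The
Temperley–Lieb relations force `P₀ψ = P₂ψ` and `P₁P₀ψ = (y / 2) P₁ψ`, so `ψ` is an eigenvector of
`2 P₀ + P₁`; sandwiching a bond parity between two copies of this operator computes its expectation
value. Since `P₀P₂` absorbs the product of the two outer bond parities of a chain, the chirality
operator of each chain fixes `ψ`. It anticommutes with the Majorana operators of its chain, so the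
covariance matrix has no entries between the two chains, and it makes each diagonal block self-dual,
hence a multiple of an orthogonal matrix.

The covariance matrix of a pure Gaussian state is orthogonal, because such a state is a simultaneous
eigenvector of the mode parities of a rotated Majorana family.
-/

section NegProj

variable {A : Type*} [Ring A] [Algebra ℂ A] {x y : A}

/-- The projection onto the `-1` eigenspace of an involution `x`. -/
def negProj (x : A) : A :=
  (1 / 2 : ℂ) • (1 - x)

lemma mul_negProj (hx : x * x = 1) : x * negProj x = -negProj x := by
  rw [negProj, mul_smul_comm, mul_sub, hx, mul_one, ← smul_neg, neg_sub]

lemma negProj_mul (hx : x * x = 1) : negProj x * x = -negProj x := by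
  rw [negProj, smul_mul_assoc, sub_mul, hx, one_mul, ← smul_neg, neg_sub]

lemma isIdempotentElem_negProj (hx : x * x = 1) : IsIdempotentElem (negProj x) := by
  have h : (1 - x) * negProj x = (2 : ℂ) • negProj x := by
    rw [sub_mul, mul_negProj hx, one_mul, sub_neg_eq_add, two_smul]
  rw [IsIdempotentElem]
  nth_rw 1 [negProj]
  rw [smul_mul_assoc, h, smul_smul]
  norm_num

lemma negProj_mul_mul_negProj_of_anticomm (hx : x * x = 1) (hxy : x * y = -(y * x)) :
    negProj x * y * negProj x = 0 := by
  have h : x * y * negProj x = y * negProj x := by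
    rw [hxy, neg_mul, mul_assoc, mul_negProj hx, mul_neg, neg_neg]
  rw [mul_assoc]
  nth_rw 1 [negProj]
  rw [smul_mul_assoc, sub_mul, one_mul, ← mul_assoc, h, sub_self, smul_zero]

lemma negProj_mul_negProj_mul_negProj_of_anticomm (hx : x * x = 1) (hxy : x * y = -(y * x)) :
    negProj x * negProj y * negProj x = (1 / 2 : ℂ) • negProj x := by
  nth_rw 2 [negProj]
  rw [mul_smul_comm, smul_mul_assoc, mul_sub, sub_mul, mul_one,
    negProj_mul_mul_negProj_of_anticomm hx hxy, sub_zero, (isIdempotentElem_negProj hx).eq]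

lemma commute_negProj_right (h : Commute x y) : Commute x (negProj y) :=
  ((Commute.one_right x).sub_right h).smul_right _

lemma commute_negProj (h : Commute x y) : Commute (negProj x) (negProj y) :=
  commute_negProj_right (commute_negProj_right h.symm).symm

lemma isSelfAdjoint_negProj [StarRing A] [StarModule ℂ A] (hx : IsSelfAdjoint x) :
    IsSelfAdjoint (negProj x) :=
  .smul (by simp [isSelfAdjoint_iff]) ((IsSelfAdjoint.one A).sub hx)

end NegProj

section TemperleyLieb

open SimpleGraph

/-- Generators of the Temperley–Lieb algebra on `n + 1` strands, normalized to be idempotent; the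
loop parameter `δ` enters as `τ = δ⁻²`. -/
structure IsTemperleyLieb {K A : Type*} [CommRing K] [Ring A] [Algebra K A] {n : ℕ} (τ : K)
    (P : Fin n → A) : Prop where
  isIdempotentElem (i : Fin n) : IsIdempotentElem (P i)
  mul_mul_self {i j : Fin n} (hij : (pathGraph n).Adj i j) : P i * P j * P i = τ • P i
  commute {i j : Fin n} (hij : ¬(pathGraph n).Adj i j) : Commute (P i) (P j)

lemma isTemperleyLieb_negProj {A : Type*} [Ring A] [Algebra ℂ A] {n : ℕ} {x : Fin n → A}
    (hx : ∀ i, x i * x i = 1)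
    (hanti : ∀ i j, (pathGraph n).Adj i j → x i * x j = -(x j * x i))
    (hcomm : ∀ i j, ¬(pathGraph n).Adj i j → Commute (x i) (x j)) :
    IsTemperleyLieb (1 / 2 : ℂ) fun i ↦ negProj (x i) where
  isIdempotentElem i := isIdempotentElem_negProj (hx i)
  mul_mul_self hij := negProj_mul_negProj_mul_negProj_of_anticomm (hx _) (hanti _ _ hij)
  commute hij := commute_negProj (hcomm _ _ hij)

namespace IsTemperleyLieb

section Constructions

variable {K A : Type*} [CommRing K] [Ring A] [Algebra K A] {n : ℕ} {σ τ : K} {P Q : Fin n → A}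

lemma comp_rev (hP : IsTemperleyLieb τ P) : IsTemperleyLieb τ (P ∘ Fin.rev) := by
  have hrev {i j : Fin n} : (pathGraph n).Adj i.rev j.rev ↔ (pathGraph n).Adj i j := by
    simp only [pathGraph_adj, Fin.val_rev]
    lia
  exact ⟨fun i ↦ hP.isIdempotentElem i.rev, fun hij ↦ hP.mul_mul_self (hrev.2 hij),
    fun hij ↦ hP.commute (mt hrev.1 hij)⟩

lemma map {B : Type*} [Ring B] [Algebra K B] (hP : IsTemperleyLieb τ P) (f : A →ₐ[K] B) :
    IsTemperleyLieb τ (f ∘ P) where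
  isIdempotentElem i := (hP.isIdempotentElem i).map f
  mul_mul_self hij := by
    simp only [Function.comp_apply, ← map_mul, hP.mul_mul_self hij, map_smul]
  commute hij := (hP.commute hij).map f

lemma mul (hP : IsTemperleyLieb σ P) (hQ : IsTemperleyLieb τ Q)
    (hPQ : ∀ i j, Commute (P i) (Q j)) :
    IsTemperleyLieb (σ * τ) fun i ↦ P i * Q i where
  isIdempotentElem i :=
    (hP.isIdempotentElem i).mul_of_commute (hPQ i i) (hQ.isIdempotentElem i)
  mul_mul_self {i j} hij := by
    calc P i * Q i * (P j * Q j) * (P i * Q i)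
      _ = P i * P j * (Q i * Q j * P i) * Q i := by
        simp only [mul_assoc, (hPQ j i).symm.left_comm]
      _ = P i * P j * P i * (Q i * Q j * Q i) := by
        rw [← ((hPQ i i).mul_right (hPQ i j)).eq]
        simp only [mul_assoc]
      _ = (σ * τ) • (P i * Q i) := by
        rw [hP.mul_mul_self hij, hQ.mul_mul_self hij, smul_mul_smul_comm]
  commute {i j} hij :=
    ((hP.commute hij).mul_right (hPQ i j)).mul_left
      ((hPQ j i).symm.mul_right (hQ.commute hij))

end Constructions

section Eigenvector

variable {K V : Type*} [Field K] [AddCommGroup V] [Module K V] {τ y : K}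
  {P : Fin 3 → Module.End K V} {v : V}

lemma outer_apply_middle_apply_eq_sub (hP : IsTemperleyLieb τ P) (hv : (∑ i, P i) v = (1 + y) • v) :
    P 0 (P 1 v) = y • P 0 v - P 0 (P 2 v) ∧ P 2 (P 1 v) = y • P 2 v - P 0 (P 2 v) := by
  have hidem (i : Fin 3) : P i (P i v) = P i v :=
    DFunLike.congr_fun (hP.isIdempotentElem i).eq v
  have hsum : P 0 v + P 1 v + P 2 v = (1 + y) • v := by
    rwa [Fin.sum_univ_three] at hv
  have happly (i : Fin 3) : P i (P 0 v) + P i (P 1 v) + P i (P 2 v) = (1 + y) • P i v := by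
    rw [← map_add, ← map_add, hsum, map_smul]
  have hcomm : P 2 (P 0 v) = P 0 (P 2 v) :=
    DFunLike.congr_fun (hP.commute (by simp [pathGraph_adj])).eq v
  constructor
  · linear_combination (norm := module) happly 0 - hidem 0
  · linear_combination (norm := module) happly 2 - hidem 2 - hcomm

lemma middle_apply_outer_apply (hP : IsTemperleyLieb τ P) (h2 : (2 : K) ≠ 0) (hy : y ≠ 0)
    (hv : (∑ i, P i) v = (1 + y) • v) :
    P 1 (P 0 v) = (y / 2) • P 1 v ∧ P 1 (P 2 v) = (y / 2) • P 1 v := by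
  obtain ⟨h01, h21⟩ := hP.outer_apply_middle_apply_eq_sub hv
  have h101 : P 1 (P 0 (P 1 v)) = τ • P 1 v :=
    DFunLike.congr_fun (hP.mul_mul_self (by simp [pathGraph_adj])) v
  have h121 : P 1 (P 2 (P 1 v)) = τ • P 1 v :=
    DFunLike.congr_fun (hP.mul_mul_self (by simp [pathGraph_adj])) v
  rw [h01, map_sub, map_smul] at h101
  rw [h21, map_sub, map_smul] at h121
  have heq : P 1 (P 0 v) = P 1 (P 2 v) :=
    smul_right_injective V hy (by linear_combination (norm := module) h101 - h121)
  have hsum : P 1 (P 0 v) + P 1 v + P 1 (P 2 v) = (1 + y) • P 1 v := by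
    rw [← map_smul, ← hv, Fin.sum_univ_three]
    simp only [LinearMap.add_apply, map_add]
    rw [show P 1 (P 1 v) = P 1 v from DFunLike.congr_fun (hP.isIdempotentElem 1).eq v]
  have hhalf : P 1 (P 0 v) = (y / 2) • P 1 v := by
    refine smul_right_injective V h2 ?_
    linear_combination (norm := (match_scalars <;> field)) hsum + heq
  exact ⟨hhalf, heq ▸ hhalf⟩

lemma outer_apply_middle_apply (hP : IsTemperleyLieb τ P) (h2 : (2 : K) ≠ 0) (hy : y ≠ 0)
    (hyτ : y ^ 2 = y + 2 * τ) (hv : (∑ i, P i) v = (1 + y) • v) :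
    P 0 (P 1 v) = (y - 1) • P 0 v ∧ P 2 (P 1 v) = (y - 1) • P 2 v := by
  obtain ⟨h10, h12⟩ := hP.middle_apply_outer_apply h2 hy hv
  have h010 : P 0 (P 1 (P 0 v)) = τ • P 0 v :=
    DFunLike.congr_fun (hP.mul_mul_self (by simp [pathGraph_adj])) v
  have h212 : P 2 (P 1 (P 2 v)) = τ • P 2 v :=
    DFunLike.congr_fun (hP.mul_mul_self (by simp [pathGraph_adj])) v
  rw [h10, map_smul] at h010
  rw [h12, map_smul] at h212
  have hτ : τ = y / 2 * (y - 1) := by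
    field_simp
    linear_combination -hyτ
  rw [hτ, mul_smul] at h010 h212
  have hy2 : y / 2 ≠ 0 := div_ne_zero hy h2
  exact ⟨smul_right_injective V hy2 h010, smul_right_injective V hy2 h212⟩

lemma outer_apply_outer_apply (hP : IsTemperleyLieb τ P) (h2 : (2 : K) ≠ 0) (hy : y ≠ 0)
    (hyτ : y ^ 2 = y + 2 * τ) (hv : (∑ i, P i) v = (1 + y) • v) :
    P 0 (P 2 v) = P 0 v ∧ P 0 (P 2 v) = P 2 v := by
  obtain ⟨h01, h21⟩ := hP.outer_apply_middle_apply h2 hy hyτ hv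
  obtain ⟨h01', h21'⟩ := hP.outer_apply_middle_apply_eq_sub hv
  constructor
  · linear_combination (norm := module) h01' - h01
  · linear_combination (norm := module) h21' - h21

end Eigenvector

end IsTemperleyLieb

end TemperleyLieb

section MajoranaFamily

variable {ι κ A : Type*} [Ring A] [StarRing A] {γ : ι → A} {i j k l : ι}

/-- A family of Majorana operators, i.e. self-adjoint generators of a Clifford algebra, indexed by
an arbitrary type. -/
structure IsMajoranaFamily (γ : ι → A) : Prop where
  isSelfAdjoint (i : ι) : IsSelfAdjoint (γ i)
  mul_self (i : ι) : γ i * γ i = 1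
  anticomm {i j : ι} (hij : i ≠ j) : γ i * γ j = -(γ j * γ i)

variable [Algebra ℂ A]

lemma IsMajoranaFamily.of_mul_add_mul [DecidableEq ι] (hsa : ∀ i, IsSelfAdjoint (γ i))
    (hγ : ∀ i j, γ i * γ j + γ j * γ i = if i = j then (2 : ℂ) • 1 else 0) :
    IsMajoranaFamily γ where
  isSelfAdjoint := hsa
  mul_self i := by
    have h := hγ i i
    rw [if_pos rfl, ← two_smul ℂ] at h
    exact smul_right_injective A two_ne_zero h
  anticomm {i j} hij := by
    have h := hγ i j
    rw [if_neg hij] at h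
    exact eq_neg_of_add_eq_zero_left h

/-- The fermion parity operator of the mode spanned by the Majorana operators `a` and `b`. -/
def pairParity (a b : A) : A :=
  Complex.I • (a * b)

omit [StarRing A] in
lemma mul_pairParity_of_commute_of_anticomm {z a b : A} (ha : Commute z a)
    (hb : z * b = -(b * z)) : z * pairParity a b = -(pairParity a b * z) := by
  rw [pairParity, mul_smul_comm, ← mul_assoc, ha.eq, mul_assoc, hb, mul_neg, smul_neg,
    ← mul_assoc, smul_mul_assoc]

omit [StarRing A] in
lemma mul_pairParity_of_anticomm_of_commute {z a b : A} (ha : z * a = -(a * z))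
    (hb : Commute z b) : z * pairParity a b = -(pairParity a b * z) := by
  rw [pairParity, mul_smul_comm, ← mul_assoc, ha, neg_mul, mul_assoc, hb.eq, smul_neg,
    ← mul_assoc, smul_mul_assoc]

omit [StarRing A] in
lemma commute_pairParity_of_anticomm {z a b : A} (ha : z * a = -(a * z)) (hb : z * b = -(b * z)) :
    Commute z (pairParity a b) := by
  rw [Commute, SemiconjBy, pairParity, mul_smul_comm, ← mul_assoc, ha, neg_mul, mul_assoc, hb,
    mul_neg, neg_neg, ← mul_assoc, smul_mul_assoc]

namespace IsMajoranaFamily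

omit [Algebra ℂ A] in
lemma comp (hγ : IsMajoranaFamily γ) {f : κ → ι} (hf : f.Injective) :
    IsMajoranaFamily (γ ∘ f) :=
  ⟨fun i ↦ hγ.isSelfAdjoint (f i), fun i ↦ hγ.mul_self (f i), fun hij ↦ hγ.anticomm (hf.ne hij)⟩

lemma mul_add_mul [DecidableEq ι] (hγ : IsMajoranaFamily γ) (i j : ι) :
    γ i * γ j + γ j * γ i = if i = j then (2 : ℂ) • 1 else 0 := by
  split_ifs with h
  · rw [h, hγ.mul_self, two_smul]
  · rw [hγ.anticomm h, neg_add_cancel]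

lemma pairParity_swap (hγ : IsMajoranaFamily γ) (hij : i ≠ j) :
    pairParity (γ j) (γ i) = -pairParity (γ i) (γ j) := by
  rw [pairParity, pairParity, hγ.anticomm hij.symm, smul_neg]

lemma pairParity_mul_self (hγ : IsMajoranaFamily γ) (hij : i ≠ j) :
    pairParity (γ i) (γ j) * pairParity (γ i) (γ j) = 1 := by
  calc pairParity (γ i) (γ j) * pairParity (γ i) (γ j)
    _ = -(γ i * (γ j * γ i) * γ j) := by
      simp only [pairParity, smul_mul_smul_comm, Complex.I_mul_I, neg_one_smul, mul_assoc]
    _ = γ i * γ i * (γ j * γ j) := by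
      rw [hγ.anticomm hij.symm]
      simp only [mul_neg, neg_mul, neg_neg, mul_assoc]
    _ = 1 := by rw [hγ.mul_self, hγ.mul_self, one_mul]

lemma isSelfAdjoint_pairParity [StarModule ℂ A] (hγ : IsMajoranaFamily γ) (hij : i ≠ j) :
    IsSelfAdjoint (pairParity (γ i) (γ j)) := by
  rw [IsSelfAdjoint, pairParity, star_smul, star_mul, (hγ.isSelfAdjoint i).star_eq,
    (hγ.isSelfAdjoint j).star_eq, hγ.anticomm hij.symm, Complex.star_def, Complex.conj_I,
    neg_smul_neg]

lemma commute_apply_pairParity (hγ : IsMajoranaFamily γ) (hki : k ≠ i) (hkj : k ≠ j) :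
    Commute (γ k) (pairParity (γ i) (γ j)) :=
  commute_pairParity_of_anticomm (hγ.anticomm hki) (hγ.anticomm hkj)

lemma left_mul_pairParity (hγ : IsMajoranaFamily γ) (hij : i ≠ j) :
    γ i * pairParity (γ i) (γ j) = -(pairParity (γ i) (γ j) * γ i) :=
  mul_pairParity_of_commute_of_anticomm (.refl _) (hγ.anticomm hij)

lemma right_mul_pairParity (hγ : IsMajoranaFamily γ) (hij : i ≠ j) :
    γ j * pairParity (γ i) (γ j) = -(pairParity (γ i) (γ j) * γ j) :=
  mul_pairParity_of_anticomm_of_commute (hγ.anticomm hij.symm) (.refl _)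

lemma commute_pairParity (hγ : IsMajoranaFamily γ) (hik : i ≠ k) (hil : i ≠ l) (hjk : j ≠ k)
    (hjl : j ≠ l) : Commute (pairParity (γ i) (γ j)) (pairParity (γ k) (γ l)) :=
  ((hγ.commute_apply_pairParity hik hil).mul_left (hγ.commute_apply_pairParity hjk hjl)).smul_left _

lemma pairParity_mul_pairParity_trans (hγ : IsMajoranaFamily γ) (i j k : ι) :
    pairParity (γ i) (γ j) * pairParity (γ j) (γ k) = Complex.I • pairParity (γ i) (γ k) := by
  simp only [pairParity, mul_smul_comm, smul_mul_assoc]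
  rw [mul_assoc, ← mul_assoc (γ j), hγ.mul_self, one_mul]

lemma pairParity_mul_pairParity_succ (hγ : IsMajoranaFamily γ) (hij : i ≠ j) (hik : i ≠ k)
    (hjk : j ≠ k) : pairParity (γ i) (γ j) * pairParity (γ j) (γ k) =
      -(pairParity (γ j) (γ k) * pairParity (γ i) (γ j)) := by
  have hj : pairParity (γ i) (γ j) * γ j = -(γ j * pairParity (γ i) (γ j)) := by
    rw [hγ.right_mul_pairParity hij, neg_neg]
  exact mul_pairParity_of_anticomm_of_commute hj
    (hγ.commute_apply_pairParity hik.symm hjk.symm).symm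

end IsMajoranaFamily

end MajoranaFamily

section MajoranaChain

open SimpleGraph

variable {A : Type*} [Ring A] [StarRing A] [Algebra ℂ A] {n : ℕ}

/-- The bond parities of an open Majorana chain. The alternating sign is that of the two chains
into which the Heisenberg Hamiltonian decouples, see `heisenbergProj`. -/
def chainParity (γ : Fin (n + 1) → A) (i : Fin n) : A :=
  (-1 : ℂ) ^ (i : ℕ) • pairParity (γ i.castSucc) (γ i.succ)

namespace IsMajoranaFamily

variable {γ : Fin (n + 1) → A}

lemma chainParity_mul_self (hγ : IsMajoranaFamily γ) (i : Fin n) :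
    chainParity γ i * chainParity γ i = 1 := by
  rw [chainParity, smul_mul_smul_comm, hγ.pairParity_mul_self i.castSucc_lt_succ.ne, ← mul_pow,
    neg_one_mul, neg_neg, one_pow, one_smul]

lemma isSelfAdjoint_chainParity [StarModule ℂ A] (hγ : IsMajoranaFamily γ) (i : Fin n) :
    IsSelfAdjoint (chainParity γ i) :=
  .smul ((IsSelfAdjoint.one ℂ).neg.pow _) (hγ.isSelfAdjoint_pairParity i.castSucc_lt_succ.ne)

lemma chainParity_anticomm (hγ : IsMajoranaFamily γ) {i j : Fin n} (hij : (pathGraph n).Adj i j) :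
    chainParity γ i * chainParity γ j = -(chainParity γ j * chainParity γ i) := by
  wlog hlt : (i : ℕ) + 1 = j generalizing i j
  · rw [this hij.symm ((pathGraph_adj.1 hij).resolve_left hlt), neg_neg]
  have hmid : i.succ = j.castSucc := Fin.ext hlt
  have hij' : i.castSucc ≠ j.castSucc := hmid ▸ i.castSucc_lt_succ.ne
  have hik : i.castSucc ≠ j.succ := by
    simp only [ne_eq, Fin.ext_iff, Fin.val_castSucc, Fin.val_succ]
    lia
  rw [chainParity, chainParity, hmid, smul_mul_smul_comm, smul_mul_smul_comm,
    hγ.pairParity_mul_pairParity_succ hij' hik j.castSucc_lt_succ.ne, smul_neg, mul_comm]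

lemma commute_chainParity_of_not_adj (hγ : IsMajoranaFamily γ) {i j : Fin n}
    (hij : ¬(pathGraph n).Adj i j) : Commute (chainParity γ i) (chainParity γ j) := by
  obtain rfl | hne := eq_or_ne i j
  · exact .refl _
  refine ((hγ.commute_pairParity ?_ ?_ ?_ ?_).smul_left _).smul_right _ <;>
  · simp only [pathGraph_adj] at hij
    simp only [ne_eq, Fin.ext_iff, Fin.val_castSucc, Fin.val_succ] at hne ⊢
    lia

lemma isTemperleyLieb_chainParity (hγ : IsMajoranaFamily γ) :
    IsTemperleyLieb (1 / 2 : ℂ) fun i ↦ negProj (chainParity γ i) :=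
  isTemperleyLieb_negProj hγ.chainParity_mul_self (fun _ _ ↦ hγ.chainParity_anticomm)
    fun _ _ ↦ hγ.commute_chainParity_of_not_adj

end IsMajoranaFamily

/-- The bond operators of an open Heisenberg chain of `n + 1` modes in terms of two Majorana chains:
each is the product of one bond projection of either chain, the second chain being traversed in the
opposite direction. -/
def heisenbergProj (γ : Fin (n + 1) ⊕ Fin (n + 1) → A) (i : Fin n) : A :=
  negProj (chainParity (γ ∘ Sum.inl) i) * negProj (chainParity (γ ∘ Sum.inr) i.rev)

namespace IsMajoranaFamily

variable {γ : Fin (n + 1) ⊕ Fin (n + 1) → A}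

lemma commute_chainParity_inl_inr (hγ : IsMajoranaFamily γ) (i j : Fin n) :
    Commute (chainParity (γ ∘ Sum.inl) i) (chainParity (γ ∘ Sum.inr) j) :=
  ((hγ.commute_pairParity Sum.inl_ne_inr Sum.inl_ne_inr Sum.inl_ne_inr Sum.inl_ne_inr).smul_left
    _).smul_right _

lemma isTemperleyLieb_heisenbergProj (hγ : IsMajoranaFamily γ) :
    IsTemperleyLieb (1 / 4 : ℂ) (heisenbergProj γ) := by
  have h := (hγ.comp Sum.inl_injective).isTemperleyLieb_chainParity.mul
    (hγ.comp Sum.inr_injective).isTemperleyLieb_chainParity.comp_rev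
    fun i j ↦ commute_negProj (hγ.commute_chainParity_inl_inr i j.rev)
  norm_num at h
  exact h

lemma isSelfAdjoint_heisenbergProj [StarModule ℂ A] (hγ : IsMajoranaFamily γ) (i : Fin n) :
    IsSelfAdjoint (heisenbergProj γ i) :=
  (isSelfAdjoint_negProj ((hγ.comp Sum.inl_injective).isSelfAdjoint_chainParity i)).commute_iff
    (isSelfAdjoint_negProj ((hγ.comp Sum.inr_injective).isSelfAdjoint_chainParity i.rev)) |>.1
    (commute_negProj (hγ.commute_chainParity_inl_inr i i.rev))

lemma heisenbergProj_comp_swap (hγ : IsMajoranaFamily γ) (i : Fin n) :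
    heisenbergProj (γ ∘ Sum.swap) i = heisenbergProj γ i.rev := by
  rw [heisenbergProj, heisenbergProj, Fin.rev_rev,
    (commute_negProj (hγ.commute_chainParity_inl_inr i.rev i)).eq]
  rfl

lemma chainParity_mul_heisenbergProj (hγ : IsMajoranaFamily γ) (i : Fin n) :
    chainParity (γ ∘ Sum.inl) i * heisenbergProj γ i = -heisenbergProj γ i := by
  rw [heisenbergProj, ← mul_assoc,
    mul_negProj ((hγ.comp Sum.inl_injective).chainParity_mul_self i), neg_mul]

lemma heisenbergProj_mul_chainParity (hγ : IsMajoranaFamily γ) (i : Fin n) :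
    heisenbergProj γ i * chainParity (γ ∘ Sum.inl) i = -heisenbergProj γ i := by
  rw [heisenbergProj, mul_assoc, ← (commute_negProj_right (hγ.commute_chainParity_inl_inr i _)).eq,
    ← mul_assoc, negProj_mul ((hγ.comp Sum.inl_injective).chainParity_mul_self i), neg_mul]

lemma heisenbergProj_mul_chainParity_mul_heisenbergProj (hγ : IsMajoranaFamily γ) {i j : Fin n}
    (hij : (pathGraph n).Adj i j) :
    heisenbergProj γ i * chainParity (γ ∘ Sum.inl) j * heisenbergProj γ i = 0 := by
  have hα := hγ.comp Sum.inl_injective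
  have h0 := negProj_mul_mul_negProj_of_anticomm (hα.chainParity_mul_self i)
    (hα.chainParity_anticomm hij)
  have hcomm := commute_negProj (hγ.commute_chainParity_inl_inr i i.rev)
  rw [mul_assoc] at h0
  simp only [heisenbergProj]
  nth_rw 1 [hcomm.eq]
  rw [mul_assoc, mul_assoc, ← mul_assoc (chainParity _ j), ← mul_assoc (negProj _) (_ * _), h0,
    zero_mul, mul_zero]

lemma commute_chainParity_heisenbergProj (hγ : IsMajoranaFamily γ) {i j : Fin n}
    (hij : ¬(pathGraph n).Adj i j) :
    Commute (chainParity (γ ∘ Sum.inl) i) (heisenbergProj γ j) :=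
  (commute_negProj_right
    ((hγ.comp Sum.inl_injective).commute_chainParity_of_not_adj hij)).mul_right
    (commute_negProj_right (hγ.commute_chainParity_inl_inr i j.rev))

end IsMajoranaFamily

end MajoranaChain

section Expectation

variable {m : Type*} [Fintype m] {ψ : m → ℂ} {M N Q : Matrix m m ℂ} {a : ℂ}

/-- The expectation value `⟨ψ, M ψ⟩`, as a linear functional of the observable `M`. -/
def expect (ψ : m → ℂ) : Matrix m m ℂ →ₗ[ℂ] ℂ where
  toFun M := star ψ ⬝ᵥ M *ᵥ ψ
  map_add' M N := by rw [add_mulVec, dotProduct_add]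
  map_smul' a M := by rw [smul_mulVec, dotProduct_smul, RingHom.id_apply]

lemma expect_apply (ψ : m → ℂ) (M : Matrix m m ℂ) : expect ψ M = star ψ ⬝ᵥ M *ᵥ ψ :=
  rfl

lemma expect_conjTranspose (ψ : m → ℂ) (M : Matrix m m ℂ) :
    expect ψ Mᴴ = star (expect ψ M) := by
  rw [expect_apply, expect_apply, star_dotProduct, star_mulVec, ← dotProduct_mulVec,
    conjTranspose_conjTranspose]

lemma expect_congr (h : M *ᵥ ψ = N *ᵥ ψ) : expect ψ M = expect ψ N := by
  rw [expect_apply, expect_apply, h]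

lemma expect_of_mulVec_eq (hψ : star ψ ⬝ᵥ ψ = 1) (hM : M *ᵥ ψ = a • ψ) : expect ψ M = a := by
  rw [expect_apply, hM, dotProduct_smul, hψ, smul_eq_mul, mul_one]

lemma expect_mul_of_mulVec_eq (hM : M *ᵥ ψ = a • ψ) (N : Matrix m m ℂ) :
    expect ψ (N * M) = a * expect ψ N := by
  rw [expect_apply, expect_apply, ← mulVec_mulVec, hM, mulVec_smul, dotProduct_smul, smul_eq_mul]

lemma expect_mul_of_isHermitian_of_mulVec_eq (hM : M.IsHermitian) (ha : IsSelfAdjoint a)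
    (hMψ : M *ᵥ ψ = a • ψ) (N : Matrix m m ℂ) : expect ψ (M * N) = a * expect ψ N := by
  rw [← conjTranspose_conjTranspose (M * N), conjTranspose_mul, hM.eq, expect_conjTranspose,
    expect_mul_of_mulVec_eq hMψ, expect_conjTranspose, star_mul', star_star, ha.star_eq]

lemma expect_eq_zero_of_anticomm (hQ : Q.IsHermitian) (ha : IsSelfAdjoint a) (ha0 : a ≠ 0)
    (hQψ : Q *ᵥ ψ = a • ψ) (hQM : Q * M = -(M * Q)) : expect ψ M = 0 := by
  have h := congrArg (expect ψ) hQM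
  rw [expect_mul_of_isHermitian_of_mulVec_eq hQ ha hQψ, map_neg, expect_mul_of_mulVec_eq hQψ] at h
  exact (mul_eq_zero_iff_left ha0).1 (self_eq_neg.1 h)

end Expectation

section Covariance

variable {m ι κ : Type*} [Fintype m] [DecidableEq m] {ψ : m → ℂ} {γ : ι → Matrix m m ℂ}

/-- The covariance matrix of the vector `ψ` with respect to the family `γ`. -/
def covariance (ψ : m → ℂ) (γ : ι → Matrix m m ℂ) : Matrix ι ι ℂ :=
  of fun i j ↦ Complex.I / 2 * expect ψ (γ i * γ j - γ j * γ i)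

omit [DecidableEq m] in
lemma covariance_self (ψ : m → ℂ) (γ : ι → Matrix m m ℂ) (i : ι) : covariance ψ γ i i = 0 := by
  rw [covariance, of_apply, sub_self, map_zero, mul_zero]

omit [DecidableEq m] in
lemma covariance_swap (ψ : m → ℂ) (γ : ι → Matrix m m ℂ) (i j : ι) :
    covariance ψ γ j i = -covariance ψ γ i j := by
  rw [covariance, of_apply, of_apply, ← mul_neg, ← map_neg, neg_sub]

lemma IsMajoranaFamily.covariance_apply_of_ne (hγ : IsMajoranaFamily γ) {i j : ι} (hij : i ≠ j) :
    covariance ψ γ i j = expect ψ (pairParity (γ i) (γ j)) := by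
  rw [covariance, of_apply, hγ.anticomm hij.symm, sub_neg_eq_add, ← two_smul ℂ, map_smul,
    pairParity, map_smul, smul_eq_mul, smul_eq_mul]
  ring

theorem IsMajoranaFamily.covariance_mul_transpose_eq_one [Fintype ι] [DecidableEq ι]
    (hγ : IsMajoranaFamily γ) (hψ : star ψ ⬝ᵥ ψ = 1)
    (hpair : ∀ i, ∃ k, i ≠ k ∧ ∃ a : ℂ, pairParity (γ i) (γ k) *ᵥ ψ = a • ψ) :
    covariance ψ γ * (covariance ψ γ)ᵀ = 1 := by
  choose f hf a ha using hpair
  have ha2 (i : ι) : a i * a i = 1 := by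
    nth_rw 2 [← expect_of_mulVec_eq hψ (ha i)]
    rw [← expect_mul_of_mulVec_eq (ha i),
      hγ.pairParity_mul_self (hf i), expect_apply, one_mulVec, hψ]
  have hasa (i : ι) : IsSelfAdjoint (a i) := by
    rcases mul_self_eq_one_iff.1 (ha2 i) with h | h <;> simp [h, isSelfAdjoint_iff]
  have hcov (i : ι) : covariance ψ γ i (f i) = a i := by
    rw [hγ.covariance_apply_of_ne (hf i), expect_of_mulVec_eq hψ (ha i)]
  have hrow (i j : ι) (hj : j ≠ f i) : covariance ψ γ i j = 0 := by
    obtain rfl | hij := eq_or_ne i j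
    · exact covariance_self ψ γ i
    rw [hγ.covariance_apply_of_ne hij]
    have hanti : pairParity (γ i) (γ (f i)) * γ i = -(γ i * pairParity (γ i) (γ (f i))) := by
      rw [hγ.left_mul_pairParity (hf i), neg_neg]
    exact expect_eq_zero_of_anticomm (hγ.isSelfAdjoint_pairParity (hf i)) (hasa i)
      (left_ne_zero_of_mul_eq_one (ha2 i)) (ha i) (mul_pairParity_of_anticomm_of_commute hanti
        (hγ.commute_apply_pairParity hij.symm hj).symm)
  have hinv (i : ι) : f (f i) = i := by
    by_contra h
    have h0 := hrow (f i) i (Ne.symm h)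
    rw [covariance_swap, hcov, neg_eq_zero] at h0
    exact left_ne_zero_of_mul_eq_one (ha2 i) h0
  ext i j
  rw [mul_apply, Fintype.sum_eq_single (f i) fun k hk ↦ by rw [hrow i k hk, zero_mul],
    transpose_apply, hcov]
  obtain rfl | hij := eq_or_ne i j
  · rw [hcov, ha2, one_apply_eq]
  · rw [hrow j (f i) fun h ↦ hij (by rw [← hinv i, h, hinv]), mul_zero, one_apply_ne hij]

omit [DecidableEq m] in
lemma covariance_mul_transpose_of_comp_equiv [Fintype ι] [Fintype κ] [DecidableEq ι]
    [DecidableEq κ] (e : κ ≃ ι) {s : ℂ}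
    (h : covariance ψ (γ ∘ e) * (covariance ψ (γ ∘ e))ᵀ = s • 1) :
    covariance ψ γ * (covariance ψ γ)ᵀ = s • 1 := by
  have hsub : covariance ψ (γ ∘ e) = (covariance ψ γ).submatrix e e := rfl
  rw [hsub, transpose_submatrix, submatrix_mul_equiv] at h
  have h' := congrArg (fun M ↦ M.submatrix e.symm e.symm) h
  simpa [submatrix_smul] using h'

end Covariance

section Rotation

variable {m ι κ : Type*} [Fintype m] [DecidableEq m] [Fintype ι]
  {ψ : m → ℂ} {γ : ι → Matrix m m ℂ} {R : Matrix κ ι ℝ}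

/-- The family of linear combinations of the `γ k` whose coefficients are the rows of `R`. -/
def rotate (R : Matrix κ ι ℝ) (γ : ι → Matrix m m ℂ) (i : κ) : Matrix m m ℂ :=
  ∑ k, (R i k : ℂ) • γ k

omit [DecidableEq m] in
lemma rotate_mul_rotate (R : Matrix κ ι ℝ) (γ : ι → Matrix m m ℂ) (i j : κ) :
    rotate R γ i * rotate R γ j = ∑ k, ∑ l, ((R i k : ℂ) * R j l) • (γ k * γ l) := by
  simp only [rotate, Finset.sum_mul_sum, smul_mul_smul_comm]

omit [DecidableEq m] in
lemma rotate_mul_rotate_swap (R : Matrix κ ι ℝ) (γ : ι → Matrix m m ℂ) (i j : κ) :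
    rotate R γ j * rotate R γ i = ∑ k, ∑ l, ((R i k : ℂ) * R j l) • (γ l * γ k) := by
  rw [rotate_mul_rotate, Finset.sum_comm]
  simp only [mul_comm]

omit [DecidableEq m] in
lemma covariance_rotate (ψ : m → ℂ) (γ : ι → Matrix m m ℂ) (R : Matrix κ ι ℝ) :
    covariance ψ (rotate R γ) =
      R.map Complex.ofReal * covariance ψ γ * (R.map Complex.ofReal)ᵀ := by
  ext i j
  rw [covariance, of_apply, rotate_mul_rotate, rotate_mul_rotate_swap]
  simp only [covariance, mul_apply, transpose_apply, map_apply, of_apply, Finset.sum_mul,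
    Finset.mul_sum, ← Finset.sum_sub_distrib, ← smul_sub, map_sum, map_smul, smul_eq_mul]
  rw [Finset.sum_comm]
  refine Finset.sum_congr rfl fun l _ ↦ Finset.sum_congr rfl fun k _ ↦ ?_
  ring

lemma IsMajoranaFamily.rotate [DecidableEq κ] (hγ : IsMajoranaFamily γ) (hR : R * Rᵀ = 1) :
    IsMajoranaFamily (rotate R γ) := by
  classical
  refine .of_mul_add_mul (fun i ↦ isSelfAdjoint_sum _ fun k _ ↦ ?_) fun i j ↦ ?_
  · exact .smul (Complex.conj_ofReal _) (hγ.isSelfAdjoint k)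
  · rw [rotate_mul_rotate, rotate_mul_rotate_swap]
    have hij := congrArg Complex.ofReal (congrFun₂ hR i j)
    simp only [mul_apply, transpose_apply, one_apply, Complex.ofReal_sum] at hij
    simp only [← Finset.sum_add_distrib, ← smul_add, hγ.mul_add_mul, smul_ite, smul_zero,
      Finset.sum_ite_eq, Finset.mem_univ, if_true, ← Finset.sum_smul]
    push_cast at hij
    rw [hij]
    split_ifs <;> simp

end Rotation

section Gaussian

variable {n : ℕ} {c : Fin (2 * n) → Matrix (Fin (2 ^ n)) (Fin (2 ^ n)) ℂ}

lemma IsMajorana.isMajoranaFamily (hc : IsMajorana n c) : IsMajoranaFamily c :=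
  .of_mul_add_mul hc.1 hc.2

lemma mulVec_eq_smul_of_commute_vecMulVec {m : Type*} [Fintype m] {ψ : m → ℂ} {M : Matrix m m ℂ}
    (hψ : star ψ ⬝ᵥ ψ = 1) (h : Commute M (vecMulVec ψ (star ψ))) :
    M *ᵥ ψ = expect ψ M • ψ := by
  have hψ' := congrArg (· *ᵥ ψ) h.eq
  simpa [← mulVec_mulVec, vecMulVec_mulVec, hψ, expect_apply] using hψ'

lemma commute_gaussOf (hc : IsMajorana n c) (lam : Fin n → ℝ)
    {R : Matrix (Fin (2 * n)) (Fin (2 * n)) ℝ} (hR : R * Rᵀ = 1) (j : Fin n) :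
    Commute (pairParity (rotate R c ⟨2 * j, by lia⟩) (rotate R c ⟨2 * j + 1, by lia⟩))
      (gaussOf n c lam R) := by
  have hγ := hc.isMajoranaFamily.rotate hR
  refine (Commute.list_prod_right _ _ fun M hM ↦ ?_).smul_right _
  obtain ⟨k, -, rfl⟩ := List.mem_map.1 hM
  have hk (a b : Matrix (Fin (2 ^ n)) (Fin (2 ^ n)) ℂ) :
      (Complex.I * lam k) • (a * b) = (lam k : ℂ) • pairParity a b := by
    rw [pairParity, smul_smul, mul_comm]
  rw [hk]
  refine (Commute.one_right _).add_right (Commute.smul_right ?_ _)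
  obtain rfl | hjk := eq_or_ne j k
  · exact .refl _
  · apply hγ.commute_pairParity <;> simp only [ne_eq, Fin.ext_iff] at hjk ⊢ <;> lia

theorem IsGaussianState.covariance_mul_transpose_eq_one {ψ : Fin (2 ^ n) → ℂ} (hc : IsMajorana n c)
    (hψ : star ψ ⬝ᵥ ψ = 1) (h : IsGaussianState n c (vecMulVec ψ (star ψ))) :
    covariance ψ c * (covariance ψ c)ᵀ = 1 := by
  obtain ⟨lam, R, -, hR, -, hρ⟩ := h
  have hγ := hc.isMajoranaFamily.rotate hR
  have hmode (j : Fin n) :=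
    mulVec_eq_smul_of_commute_vecMulVec hψ (hρ ▸ commute_gaussOf hc lam hR j)
  have hrot : covariance ψ (rotate R c) * (covariance ψ (rotate R c))ᵀ = 1 := by
    refine hγ.covariance_mul_transpose_eq_one hψ fun i ↦ ?_
    obtain ⟨j, rfl | rfl⟩ : ∃ j : Fin n, i = ⟨2 * j, by lia⟩ ∨ i = ⟨2 * j + 1, by lia⟩ :=
      ⟨⟨i / 2, by lia⟩, by simp only [Fin.ext_iff]; lia⟩
    · exact ⟨_, by simp, _, hmode j⟩
    · refine ⟨⟨2 * j, by lia⟩, by simp, ?_⟩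
      rw [hγ.pairParity_swap (by simp), neg_mulVec, hmode j, ← neg_smul]
      exact ⟨_, rfl⟩
  set S := R.map Complex.ofReal
  have hS : S * Sᵀ = 1 :=
    (Complex.ofRealHom.mapMatrix.map_mul R Rᵀ).symm.trans (by rw [hR, map_one])
  have hS' : Sᵀ * S = 1 := mul_eq_one_comm.1 hS
  rw [covariance_rotate] at hrot
  calc covariance ψ c * (covariance ψ c)ᵀ
    _ = Sᵀ * S * covariance ψ c * (Sᵀ * S) * (covariance ψ c)ᵀ * (Sᵀ * S) := by
      rw [hS', one_mul, mul_one, mul_one]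
    _ = Sᵀ * (S * covariance ψ c * Sᵀ * (S * covariance ψ c * Sᵀ)ᵀ) * S := by
      simp only [transpose_mul, transpose_transpose, Matrix.mul_assoc]
    _ = 1 := by rw [hrot, mul_one, hS']

end Gaussian

lemma ne_zero_of_sq_eq_add_half {y : ℂ} (hy : y ^ 2 = y + 1 / 2) : y ≠ 0 := by
  rintro rfl
  norm_num at hy

lemma one_add_ne_zero_of_sq_eq_add_half {y : ℂ} (hy : y ^ 2 = y + 1 / 2) : 1 + y ≠ 0 := by
  intro h
  rw [eq_neg_of_add_eq_zero_right h] at hy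
  norm_num at hy

namespace IsTemperleyLieb

variable {m : Type*} [Fintype m] [DecidableEq m] {P : Fin 3 → Matrix m m ℂ} {ψ : m → ℂ} {y : ℂ}

lemma mulVec_mulVec_of_sum_mulVec (hP : IsTemperleyLieb (1 / 4 : ℂ) P) (hy : y ^ 2 = y + 1 / 2)
    (hv : (∑ i, P i) *ᵥ ψ = (1 + y) • ψ) :
    P 1 *ᵥ P 0 *ᵥ ψ = (y / 2) • P 1 *ᵥ ψ ∧ P 0 *ᵥ P 1 *ᵥ ψ = (y - 1) • P 0 *ᵥ ψ ∧
      P 0 *ᵥ P 2 *ᵥ ψ = P 0 *ᵥ ψ ∧ P 0 *ᵥ P 2 *ᵥ ψ = P 2 *ᵥ ψ := by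
  have hy0 := ne_zero_of_sq_eq_add_half hy
  have hyτ : y ^ 2 = y + 2 * (1 / 4) := by
    linear_combination hy
  have hP' := hP.map toLinAlgEquiv'.toAlgHom
  have hv' : (∑ i, (toLinAlgEquiv'.toAlgHom ∘ P) i) ψ = (1 + y) • ψ := by
    simp only [Function.comp_apply]
    rw [← map_sum]
    exact hv
  exact ⟨(hP'.middle_apply_outer_apply two_ne_zero hy0 hv').1,
    (hP'.outer_apply_middle_apply two_ne_zero hy0 hyτ hv').1,
    hP'.outer_apply_outer_apply two_ne_zero hy0 hyτ hv'⟩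

lemma two_smul_add_mulVec (hP : IsTemperleyLieb (1 / 4 : ℂ) P) (hy : y ^ 2 = y + 1 / 2)
    (hv : (∑ i, P i) *ᵥ ψ = (1 + y) • ψ) : ((2 : ℂ) • P 0 + P 1) *ᵥ ψ = (1 + y) • ψ := by
  obtain ⟨-, -, h0, h2⟩ := hP.mulVec_mulVec_of_sum_mulVec hy hv
  rw [← hv, Fin.sum_univ_three, add_mulVec, add_mulVec, add_mulVec, smul_mulVec, ← h2, h0]
  module

section Expectation

variable (hP : IsTemperleyLieb (1 / 4 : ℂ) P) (hsa : ∀ i, (P i).IsHermitian)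
  (hy : y ^ 2 = y + 1 / 2) (hyr : IsSelfAdjoint y)
  (hψ : star ψ ⬝ᵥ ψ = 1) (hv : (∑ i, P i) *ᵥ ψ = (1 + y) • ψ)
include hP hsa hy hyr hv

lemma expect_middle_mul_outer :
    expect ψ (P 1 * P 0) = y / 2 * expect ψ (P 1) ∧
      expect ψ (P 0 * P 1) = y / 2 * expect ψ (P 1) := by
  obtain ⟨h10, -⟩ := hP.mulVec_mulVec_of_sum_mulVec hy hv
  have h : expect ψ (P 1 * P 0) = y / 2 * expect ψ (P 1) := by
    rw [expect_congr (N := (y / 2) • P 1) (by rw [← mulVec_mulVec, h10, smul_mulVec]), map_smul,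
      smul_eq_mul]
  refine ⟨h, ?_⟩
  rw [← (hsa 0).eq, ← (hsa 1).eq, ← conjTranspose_mul, expect_conjTranspose, h, star_mul',
    ← expect_conjTranspose, star_div₀, hyr.star_eq]
  simp

lemma one_add_sq_mul_expect (O : Matrix m m ℂ) : (1 + y) ^ 2 * expect ψ O =
    4 * expect ψ (P 0 * O * P 0) + 2 * expect ψ (P 0 * O * P 1) +
      2 * expect ψ (P 1 * O * P 0) + expect ψ (P 1 * O * P 1) := by
  have hS := hP.two_smul_add_mulVec hy hv
  have hSsa : ((2 : ℂ) • P 0 + P 1).IsHermitian :=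
    ((hsa 0).smul (by simp)).add (hsa 1)
  have hμ : IsSelfAdjoint (1 + y) := (IsSelfAdjoint.one ℂ).add hyr
  rw [sq, mul_assoc, ← expect_mul_of_mulVec_eq hS,
    ← expect_mul_of_isHermitian_of_mulVec_eq hSsa hμ hS]
  simp only [add_mul, mul_add, smul_mul_assoc, mul_smul_comm, map_add, map_smul, smul_eq_mul,
    mul_assoc]
  ring

include hψ

lemma expect_middle_and_outer : expect ψ (P 1) = 1 / 2 ∧ expect ψ (P 0) = y ^ 2 / 2 := by
  obtain ⟨-, h01, -⟩ := hP.mulVec_mulVec_of_sum_mulVec hy hv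
  have hsum : 2 * expect ψ (P 0) + expect ψ (P 1) = 1 + y := by
    rw [← expect_of_mulVec_eq hψ (hP.two_smul_add_mulVec hy hv), map_add, map_smul, smul_eq_mul]
  have hratio : y / 2 * expect ψ (P 1) = (y - 1) * expect ψ (P 0) := by
    rw [← (hP.expect_middle_mul_outer hsa hy hyr hv).2,
      expect_congr (N := (y - 1) • P 0) (by rw [← mulVec_mulVec, h01, smul_mulVec]), map_smul,
      smul_eq_mul]
  have hp0 : expect ψ (P 0) = y ^ 2 * expect ψ (P 1) := by
    linear_combination -2 * expect ψ (P 0) * hy - 2 * y * hratio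
  have hp1 : expect ψ (P 1) = 1 / 2 := by
    refine mul_left_cancel₀ (one_add_ne_zero_of_sq_eq_add_half hy) ?_
    linear_combination hsum / 2 - hp0 - expect ψ (P 1) * hy
  exact ⟨hp1, by rw [hp0, hp1, mul_one_div]⟩

end Expectation

end IsTemperleyLieb

section SelfDual

variable {m ι : Type*} [Fintype m] [DecidableEq m] {ψ : m → ℂ}

lemma IsMajoranaFamily.pairParity_mul_pairParity_cycle {A : Type*} [Ring A] [StarRing A]
    [Algebra ℂ A] {γ : ι → A} (hγ : IsMajoranaFamily γ) {i j k l : ι} (hjk : j ≠ k) (hjl : j ≠ l) :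
    pairParity (γ i) (γ k) * pairParity (γ l) (γ j) =
      pairParity (γ i) (γ j) * pairParity (γ k) (γ l) := by
  have h := (hγ.commute_apply_pairParity hjk hjl).eq
  simp only [pairParity, mul_smul_comm, smul_mul_assoc] at h ⊢
  rw [mul_assoc (γ i) (γ j), smul_right_injective A Complex.I_ne_zero h]
  simp only [mul_assoc]

lemma IsMajoranaFamily.expect_pairParity_eq_of_mul_mulVec {γ : ι → Matrix m m ℂ}
    (hγ : IsMajoranaFamily γ) {i j k l : ι} (hij : i ≠ j)
    (h : (pairParity (γ i) (γ j) * pairParity (γ k) (γ l)) *ᵥ ψ = ψ) :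
    expect ψ (pairParity (γ k) (γ l)) = expect ψ (pairParity (γ i) (γ j)) := by
  refine expect_congr ?_
  nth_rw 2 [← h]
  rw [mulVec_mulVec, ← mul_assoc, hγ.pairParity_mul_self hij, one_mul]

/-- The chirality operator of four Majorana operators. -/
def chirality {A : Type*} [Ring A] [Algebra ℂ A] (γ : Fin 4 → A) : A :=
  pairParity (γ 0) (γ 1) * pairParity (γ 2) (γ 3)

lemma IsMajoranaFamily.chirality_mul_apply {A : Type*} [Ring A] [StarRing A] [Algebra ℂ A]
    {γ : Fin 4 → A} (hγ : IsMajoranaFamily γ) (i : Fin 4) :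
    chirality γ * γ i = -(γ i * chirality γ) := by
  have hfst (z p q : A) (hp : z * p = -(p * z)) (hq : Commute z q) :
      p * q * z = -(z * (p * q)) := by
    rw [← mul_assoc, hp, neg_mul, neg_neg, mul_assoc, mul_assoc, hq.eq]
  have hsnd (z p q : A) (hp : Commute z p) (hq : z * q = -(q * z)) :
      p * q * z = -(z * (p * q)) := by
    rw [← mul_assoc, hp.eq, mul_assoc, mul_assoc, hq, mul_neg, neg_neg]
  fin_cases i
  · exact hfst _ _ _ (hγ.left_mul_pairParity (by decide))
      (hγ.commute_apply_pairParity (by decide) (by decide))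
  · exact hfst _ _ _ (hγ.right_mul_pairParity (by decide))
      (hγ.commute_apply_pairParity (by decide) (by decide))
  · exact hsnd _ _ _ (hγ.commute_apply_pairParity (by decide) (by decide))
      (hγ.left_mul_pairParity (by decide))
  · exact hsnd _ _ _ (hγ.commute_apply_pairParity (by decide) (by decide))
      (hγ.right_mul_pairParity (by decide))

theorem IsMajoranaFamily.covariance_mul_transpose_of_chirality_mulVec {γ : Fin 4 → Matrix m m ℂ}
    (hγ : IsMajoranaFamily γ) (h : chirality γ *ᵥ ψ = ψ) :
    covariance ψ γ * (covariance ψ γ)ᵀ = (covariance ψ γ 0 1 ^ 2 + covariance ψ γ 0 2 ^ 2 +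
      covariance ψ γ 1 2 ^ 2) • 1 := by
  have h' : (pairParity (γ 0) (γ 2) * pairParity (γ 3) (γ 1)) *ᵥ ψ = ψ := by
    rwa [hγ.pairParity_mul_pairParity_cycle (by decide) (by decide)]
  have h'' : (pairParity (γ 0) (γ 3) * pairParity (γ 1) (γ 2)) *ᵥ ψ = ψ := by
    rwa [hγ.pairParity_mul_pairParity_cycle (by decide) (by decide)]
  have hdual (i j k l : Fin 4) (hij : i ≠ j) (hkl : k ≠ l)
      (h : (pairParity (γ i) (γ j) * pairParity (γ k) (γ l)) *ᵥ ψ = ψ) :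
      covariance ψ γ k l = covariance ψ γ i j := by
    rw [hγ.covariance_apply_of_ne hkl, hγ.covariance_apply_of_ne hij,
      hγ.expect_pairParity_eq_of_mul_mulVec hij h]
  have h23 := hdual 0 1 2 3 (by decide) (by decide) h
  have h31 := hdual 0 2 3 1 (by decide) (by decide) h'
  have h03 := (hdual 0 3 1 2 (by decide) (by decide) h'').symm
  have hswap := covariance_swap ψ γ
  have hC : covariance ψ γ =
      let a := covariance ψ γ 0 1
      let b := covariance ψ γ 0 2
      let c := covariance ψ γ 1 2
      !![0, a, b, c; -a, 0, c, -b; -b, -c, 0, a; -c, b, -a, 0] := by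
    ext i j
    fin_cases i <;> fin_cases j <;>
      simp [covariance_self, h23, h31, h03, hswap 0 1, hswap 0 2, hswap 0 3, hswap 1 2, hswap 3 1,
        hswap 2 3]
  generalize covariance ψ γ 0 1 = a, covariance ψ γ 0 2 = b, covariance ψ γ 1 2 = c at hC ⊢
  rw [hC]
  ext i j
  fin_cases i <;> fin_cases j <;> simp [mul_apply, Fin.sum_univ_four] <;> ring

end SelfDual

section HeisenbergEigenvector

open SimpleGraph

namespace IsMajoranaFamily

lemma commute_chirality_heisenbergProj_one {A : Type*} [Ring A] [StarRing A] [Algebra ℂ A]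
    {γ : Fin 4 ⊕ Fin 4 → A} (hγ : IsMajoranaFamily γ) :
    Commute (chirality (γ ∘ Sum.inl)) (heisenbergProj γ 1) := by
  have hα := hγ.comp Sum.inl_injective
  have hinl : Commute (chirality (γ ∘ Sum.inl)) (chainParity (γ ∘ Sum.inl) 1) :=
    .smul_right (commute_pairParity_of_anticomm (hα.chirality_mul_apply _)
      (hα.chirality_mul_apply _)) _
  have hinr (i j : Fin 4) :
      Commute (pairParity (γ (.inl i)) (γ (.inl j))) (chainParity (γ ∘ Sum.inr) 1) :=
    .smul_right (hγ.commute_pairParity Sum.inl_ne_inr Sum.inl_ne_inr Sum.inl_ne_inr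
      Sum.inl_ne_inr) _
  exact (commute_negProj_right hinl).mul_right
    (commute_negProj_right ((hinr 0 1).mul_left (hinr 2 3)))

variable {m : Type*} [Fintype m] [DecidableEq m] {γ : Fin 4 ⊕ Fin 4 → Matrix m m ℂ} {ψ : m → ℂ}
  {y : ℂ} (hγ : IsMajoranaFamily γ) (hy : y ^ 2 = y + 1 / 2)
  (hv : (∑ i, heisenbergProj γ i) *ᵥ ψ = (1 + y) • ψ)
include hγ hy hv

lemma chirality_mulVec_heisenberg : chirality (γ ∘ Sum.inl) *ᵥ ψ = ψ := by
  have hP := hγ.isTemperleyLieb_heisenbergProj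
  obtain ⟨h10, -, h02, -⟩ := hP.mulVec_mulVec_of_sum_mulVec hy hv
  have hS := hP.two_smul_add_mulVec hy hv
  set Q := chirality (γ ∘ Sum.inl)
  have hQ : Q = chainParity (γ ∘ Sum.inl) 0 * chainParity (γ ∘ Sum.inl) 2 := by
    simp [Q, chirality, chainParity]
  have hQ02 : Q * (heisenbergProj γ 0 * heisenbergProj γ 2) =
      heisenbergProj γ 0 * heisenbergProj γ 2 := by
    have hcomm : Commute (chainParity (γ ∘ Sum.inl) 2) (heisenbergProj γ 0) :=
      hγ.commute_chainParity_heisenbergProj (by simp [pathGraph_adj])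
    rw [hQ, mul_assoc, ← mul_assoc (chainParity _ 2), hcomm.eq, mul_assoc,
      chainParity_mul_heisenbergProj hγ, ← mul_assoc, chainParity_mul_heisenbergProj hγ,
      neg_mul_neg]
  have hQ0 : Q *ᵥ heisenbergProj γ 0 *ᵥ ψ = heisenbergProj γ 0 *ᵥ ψ := by
    nth_rw 1 [← h02]
    rw [mulVec_mulVec, mulVec_mulVec, mul_assoc, hQ02, ← mulVec_mulVec, h02]
  have hQ1 : Q *ᵥ heisenbergProj γ 1 *ᵥ ψ = heisenbergProj γ 1 *ᵥ ψ := by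
    refine smul_right_injective _ (div_ne_zero (ne_zero_of_sq_eq_add_half hy) two_ne_zero) ?_
    dsimp only
    rw [← mulVec_smul, ← h10, mulVec_mulVec, hγ.commute_chirality_heisenbergProj_one.eq,
      ← mulVec_mulVec, hQ0]
  refine smul_right_injective _ (one_add_ne_zero_of_sq_eq_add_half hy) ?_
  dsimp only
  rw [← mulVec_smul, ← hS, add_mulVec, smul_mulVec, mulVec_add, mulVec_smul, hQ0, hQ1]

section Expectation

variable (hyr : IsSelfAdjoint y) (hψ : star ψ ⬝ᵥ ψ = 1)
include hyr hψ

lemma expect_chainParity_zero_heisenberg :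
    expect ψ (chainParity (γ ∘ Sum.inl) 0) = -(2 / 3) * y := by
  have hP := hγ.isTemperleyLieb_heisenbergProj
  have hsa := hγ.isSelfAdjoint_heisenbergProj
  obtain ⟨hE1, hE0⟩ := hP.expect_middle_and_outer hsa hy hyr hψ hv
  obtain ⟨hE10, hE01⟩ := hP.expect_middle_mul_outer hsa hy hyr hv
  have h := hP.one_add_sq_mul_expect hsa hy hyr hv (chainParity (γ ∘ Sum.inl) 0)
  have h1 : heisenbergProj γ 1 * chainParity (γ ∘ Sum.inl) 0 * heisenbergProj γ 1 = 0 :=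
    hγ.heisenbergProj_mul_chainParity_mul_heisenbergProj (by simp [pathGraph_adj])
  rw [h1, mul_assoc (heisenbergProj γ 1), chainParity_mul_heisenbergProj hγ,
    heisenbergProj_mul_chainParity hγ, neg_mul, neg_mul, mul_neg, (hP.isIdempotentElem 0).eq]
    at h
  simp only [map_neg, map_zero, hE01, hE10, hE0, hE1] at h
  refine mul_left_cancel₀ (pow_ne_zero 2 (ne_zero_of_sq_eq_add_half hy)) ?_
  linear_combination h / 3 + 2 / 3 * (expect ψ (chainParity (γ ∘ Sum.inl) 0) + y) * hy

lemma expect_chainParity_one_heisenberg :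
    expect ψ (chainParity (γ ∘ Sum.inl) 1) = -(1 / 3) := by
  have hP := hγ.isTemperleyLieb_heisenbergProj
  have hsa := hγ.isSelfAdjoint_heisenbergProj
  obtain ⟨hE1, -⟩ := hP.expect_middle_and_outer hsa hy hyr hψ hv
  obtain ⟨hE10, hE01⟩ := hP.expect_middle_mul_outer hsa hy hyr hv
  have h := hP.one_add_sq_mul_expect hsa hy hyr hv (chainParity (γ ∘ Sum.inl) 1)
  have h0 : heisenbergProj γ 0 * chainParity (γ ∘ Sum.inl) 1 * heisenbergProj γ 0 = 0 :=
    hγ.heisenbergProj_mul_chainParity_mul_heisenbergProj (by simp [pathGraph_adj])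
  rw [h0, mul_assoc (heisenbergProj γ 0), chainParity_mul_heisenbergProj hγ,
    heisenbergProj_mul_chainParity hγ, neg_mul, neg_mul, mul_neg, (hP.isIdempotentElem 1).eq]
    at h
  simp only [map_neg, map_zero, hE01, hE10, hE1] at h
  refine mul_left_cancel₀ (pow_ne_zero 2 (ne_zero_of_sq_eq_add_half hy)) ?_
  linear_combination h / 3 + (2 / 3 * expect ψ (chainParity (γ ∘ Sum.inl) 1) + 1 / 3) * hy

omit hψ in
lemma expect_chainParity_zero_mul_one_heisenberg :
    expect ψ (chainParity (γ ∘ Sum.inl) 0 * chainParity (γ ∘ Sum.inl) 1) = 0 := by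
  have hP := hγ.isTemperleyLieb_heisenbergProj
  have hα := hγ.comp Sum.inl_injective
  have hsa := hγ.isSelfAdjoint_heisenbergProj
  obtain ⟨hE10, hE01⟩ := hP.expect_middle_mul_outer hsa hy hyr hv
  set x := chainParity (γ ∘ Sum.inl)
  have h := hP.one_add_sq_mul_expect hsa hy hyr hv (x 0 * x 1)
  have h0 : heisenbergProj γ 0 * (x 0 * x 1) * heisenbergProj γ 0 = 0 := by
    rw [← mul_assoc, heisenbergProj_mul_chainParity hγ, neg_mul, neg_mul,
      hγ.heisenbergProj_mul_chainParity_mul_heisenbergProj (by simp [pathGraph_adj]), neg_zero]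
  have h1 : heisenbergProj γ 1 * (x 0 * x 1) * heisenbergProj γ 1 = 0 := by
    rw [mul_assoc, mul_assoc, chainParity_mul_heisenbergProj hγ, mul_neg, mul_neg, ← mul_assoc,
      hγ.heisenbergProj_mul_chainParity_mul_heisenbergProj (by simp [pathGraph_adj]), neg_zero]
  have h01 : heisenbergProj γ 0 * (x 0 * x 1) * heisenbergProj γ 1 =
      heisenbergProj γ 0 * heisenbergProj γ 1 := by
    rw [← mul_assoc, heisenbergProj_mul_chainParity hγ, mul_assoc,
      chainParity_mul_heisenbergProj hγ, neg_mul_neg]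
  have h10 : heisenbergProj γ 1 * (x 0 * x 1) * heisenbergProj γ 0 =
      -(heisenbergProj γ 1 * heisenbergProj γ 0) := by
    rw [hα.chainParity_anticomm (by simp [pathGraph_adj]), mul_neg, neg_mul, ← mul_assoc,
      heisenbergProj_mul_chainParity hγ, mul_assoc, chainParity_mul_heisenbergProj hγ, neg_mul_neg]
  rw [h0, h1, h01, h10, map_neg, map_zero, hE01, hE10, mul_zero, mul_neg, zero_add, add_zero,
    add_neg_cancel] at h
  exact (mul_eq_zero.1 h).resolve_left (pow_ne_zero 2 (one_add_ne_zero_of_sq_eq_add_half hy))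

end Expectation

lemma covariance_inl_mul_transpose_heisenberg (hyr : IsSelfAdjoint y) (hψ : star ψ ⬝ᵥ ψ = 1) :
    covariance ψ (γ ∘ Sum.inl) * (covariance ψ (γ ∘ Sum.inl))ᵀ = ((4 * y + 3) / 9) • 1 := by
  have hα := hγ.comp Sum.inl_injective
  have h01 : covariance ψ (γ ∘ Sum.inl) 0 1 = -(2 / 3) * y := by
    rw [hα.covariance_apply_of_ne (by decide),
      ← hγ.expect_chainParity_zero_heisenberg hy hv hyr hψ]
    simp [chainParity]
  have h12 : covariance ψ (γ ∘ Sum.inl) 1 2 = 1 / 3 := by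
    rw [hα.covariance_apply_of_ne (by decide), ← neg_neg (1 / 3 : ℂ),
      ← hγ.expect_chainParity_one_heisenberg hy hv hyr hψ]
    simp [chainParity]
  have h02 : covariance ψ (γ ∘ Sum.inl) 0 2 = 0 := by
    have h := hγ.expect_chainParity_zero_mul_one_heisenberg hy hv hyr
    have hmul : chainParity (γ ∘ Sum.inl) 0 * chainParity (γ ∘ Sum.inl) 1 =
        -Complex.I • pairParity (γ (.inl 0)) (γ (.inl 2)) := by
      rw [neg_smul, ← hγ.pairParity_mul_pairParity_trans (.inl 0) (.inl 1) (.inl 2)]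
      simp [chainParity]
    rw [hmul, map_smul] at h
    rw [hα.covariance_apply_of_ne (by decide)]
    exact (smul_eq_zero.1 h).resolve_left (neg_ne_zero.2 Complex.I_ne_zero)
  rw [hα.covariance_mul_transpose_of_chirality_mulVec (hγ.chirality_mulVec_heisenberg hy hv), h01,
    h02, h12]
  congr 1
  linear_combination 4 / 9 * hy

lemma covariance_inl_inr_heisenberg (i j : Fin 4) : covariance ψ γ (.inl i) (.inr j) = 0 := by
  have hα := hγ.comp Sum.inl_injective
  have hpair (k l : Fin 4) : Commute (γ (.inr j)) (pairParity (γ (.inl k)) (γ (.inl l))) :=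
    hγ.commute_apply_pairParity Sum.inr_ne_inl Sum.inr_ne_inl
  have hsa : (chirality (γ ∘ Sum.inl)).IsHermitian :=
    (hα.isSelfAdjoint_pairParity (by decide)).commute_iff
      (hα.isSelfAdjoint_pairParity (by decide)) |>.1
      (hα.commute_pairParity (by decide) (by decide) (by decide) (by decide))
  rw [hγ.covariance_apply_of_ne Sum.inl_ne_inr]
  exact expect_eq_zero_of_anticomm hsa (.one ℂ) one_ne_zero
    (by rw [hγ.chirality_mulVec_heisenberg hy hv, one_smul])
    (mul_pairParity_of_anticomm_of_commute (hα.chirality_mul_apply i)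
      ((hpair 0 1).mul_right (hpair 2 3)).symm)

theorem covariance_mul_transpose_heisenberg (hyr : IsSelfAdjoint y) (hψ : star ψ ⬝ᵥ ψ = 1) :
    covariance ψ γ * (covariance ψ γ)ᵀ = ((4 * y + 3) / 9) • 1 := by
  have hγ' : IsMajoranaFamily (γ ∘ Sum.swap) := hγ.comp Sum.swap_leftInverse.injective
  have hv' : (∑ i, heisenbergProj (γ ∘ Sum.swap) i) *ᵥ ψ = (1 + y) • ψ := by
    rw [← hv, ← Equiv.sum_comp Fin.revPerm]
    simp [heisenbergProj_comp_swap hγ]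
  have hinl := hγ.covariance_inl_mul_transpose_heisenberg hy hv hyr hψ
  have hinr : covariance ψ (γ ∘ Sum.inr) * (covariance ψ (γ ∘ Sum.inr))ᵀ = ((4 * y + 3) / 9) • 1 :=
    hγ'.covariance_inl_mul_transpose_heisenberg hy hv' hyr hψ
  have hblocks : covariance ψ γ =
      fromBlocks (covariance ψ (γ ∘ Sum.inl)) 0 0 (covariance ψ (γ ∘ Sum.inr)) := by
    ext (i | i) (j | j)
    · rfl
    · exact hγ.covariance_inl_inr_heisenberg hy hv i j
    · exact hγ'.covariance_inl_inr_heisenberg hy hv' i j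
    · rfl
  rw [hblocks, fromBlocks_transpose, fromBlocks_multiply, hinl, hinr]
  simp [← fromBlocks_one, fromBlocks_smul]

end IsMajoranaFamily

end HeisenbergEigenvector

section Heisenberg

variable {n : ℕ} {c : Fin (2 * n) → Matrix (Fin (2 ^ n)) (Fin (2 ^ n)) ℂ}

lemma IsMajorana.isMajoranaFamily_sumElim (hc : IsMajorana n c) :
    IsMajoranaFamily (Sum.elim (majA n c) (majB n c)) := by
  have hinj : (Sum.elim (fun j : Fin n ↦ (⟨2 * j, by lia⟩ : Fin (2 * n)))
      fun j : Fin n ↦ ⟨2 * j + 1, by lia⟩).Injective := by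
    rintro (i | i) (j | j) h <;>
      simp only [Sum.elim_inl, Sum.elim_inr, Sum.inl.injEq, Sum.inr.injEq,
        Fin.ext_iff, reduceCtorEq] at h ⊢ <;> lia
  convert hc.isMajoranaFamily.comp hinj using 1
  ext1 (j | j) <;> rfl

lemma ann_conjTranspose (hc : IsMajorana n c) (j : Fin n) :
    (ann n c j)ᴴ = (1 / 2 : ℂ) • (majA n c j - Complex.I • majB n c j) := by
  have hA : (majA n c j)ᴴ = majA n c j := hc.1 _
  have hB : (majB n c j)ᴴ = majB n c j := hc.1 _
  simp [ann, conjTranspose_smul, hA, hB, sub_eq_add_neg]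

lemma num_eq_one_add_pairParity (hc : IsMajorana n c) (j : Fin n) :
    num n c j = (1 / 2 : ℂ) • (1 + pairParity (majA n c j) (majB n c j)) := by
  have hγ := hc.isMajoranaFamily_sumElim
  have hA : majA n c j * majA n c j = 1 := hγ.mul_self (.inl j)
  have hB : majB n c j * majB n c j = 1 := hγ.mul_self (.inr j)
  have hBA : majB n c j * majA n c j = -(majA n c j * majB n c j) := hγ.anticomm Sum.inr_ne_inl
  rw [num, ann_conjTranspose hc, ann, pairParity]
  simp only [smul_mul_assoc, mul_smul_comm, sub_mul, mul_add, hA, hB, hBA, smul_sub, smul_add,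
    smul_smul, smul_neg]
  match_scalars <;> ring_nf
  norm_num [Complex.I_sq]

lemma ann_hopping_eq_pairParity (hc : IsMajorana n c) {i j : Fin n} (hij : i ≠ j) :
    (ann n c i)ᴴ * ann n c j + (ann n c j)ᴴ * ann n c i = (1 / 2 : ℂ) •
      (pairParity (majA n c i) (majB n c j) + pairParity (majA n c j) (majB n c i)) := by
  have hγ := hc.isMajoranaFamily_sumElim
  have hAA : majA n c j * majA n c i = -(majA n c i * majA n c j) :=
    hγ.anticomm (Sum.inl_injective.ne hij.symm)
  have hBB : majB n c j * majB n c i = -(majB n c i * majB n c j) :=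
    hγ.anticomm (Sum.inr_injective.ne hij.symm)
  have hBA (k l : Fin n) : majB n c k * majA n c l = -(majA n c l * majB n c k) :=
    hγ.anticomm Sum.inr_ne_inl
  rw [ann_conjTranspose hc, ann_conjTranspose hc, ann, ann, pairParity, pairParity]
  simp only [smul_mul_assoc, mul_smul_comm, sub_mul, mul_add, hAA, hBB, hBA, smul_sub, smul_add,
    smul_smul, smul_neg]
  match_scalars <;> ring_nf

/-- The term of the fermionic Heisenberg Hamiltonian which couples the modes `i` and `j`. -/
def bondTerm (n : ℕ) (c : Fin (2 * n) → Matrix (Fin (2 ^ n)) (Fin (2 ^ n)) ℂ) (i j : Fin n) :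
    Matrix (Fin (2 ^ n)) (Fin (2 ^ n)) ℂ :=
  (-(1 / 2 : ℂ)) • ((ann n c i)ᴴ * ann n c j + (ann n c j)ᴴ * ann n c i) +
    ((1 / 4 : ℂ) • 1 - num n c i * num n c j) + (1 / 2 : ℂ) • (num n c i - (1 / 2 : ℂ) • 1) +
      (1 / 2 : ℂ) • (num n c j - (1 / 2 : ℂ) • 1)

lemma bondTerm_eq_negProj_mul_negProj (hc : IsMajorana n c) {i j : Fin n} (hij : i ≠ j) :
    bondTerm n c i j = negProj (pairParity (majA n c i) (majB n c j)) *
      negProj (pairParity (majA n c j) (majB n c i)) - (1 / 4 : ℂ) • 1 := by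
  have hγ := hc.isMajoranaFamily_sumElim
  have hswap : pairParity (majB n c j) (majA n c j) = -pairParity (majA n c j) (majB n c j) :=
    hγ.pairParity_swap Sum.inl_ne_inr
  have hcycle : pairParity (majA n c i) (majB n c j) * pairParity (majA n c j) (majB n c i) =
      pairParity (majA n c i) (majB n c i) * pairParity (majB n c j) (majA n c j) :=
    hγ.pairParity_mul_pairParity_cycle (i := .inl i) (j := .inr i) (k := .inr j) (l := .inl j)
      (Sum.inr_injective.ne hij) Sum.inr_ne_inl
  rw [hswap, mul_neg] at hcycle
  rw [bondTerm, ann_hopping_eq_pairParity hc hij, num_eq_one_add_pairParity hc,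
    num_eq_one_add_pairParity hc, negProj, negProj]
  simp only [smul_mul_assoc, mul_smul_comm, sub_mul, mul_sub, add_mul, mul_add, one_mul, mul_one,
    hcycle]
  module

/-- The Majorana operators of the two chains into which four modes decouple: `a₀, b₁, a₂, b₃` and
`a₃, b₂, a₁, b₀`, where `aⱼ` and `bⱼ` are those of mode `j`. -/
def chainIndex : Fin 4 ⊕ Fin 4 ≃ Fin (2 * 4) :=
  Equiv.ofBijective (Sum.elim ![0, 3, 4, 7] ![6, 5, 2, 1]) (by decide)

lemma sum_heisenbergProj_comp_chainIndex {c : Fin (2 * 4) → Matrix (Fin (2 ^ 4)) (Fin (2 ^ 4)) ℂ}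
    (hc : IsMajorana 4 c) : ∑ i, heisenbergProj (c ∘ chainIndex) i =
      bondTerm 4 c 0 1 + bondTerm 4 c 1 2 + bondTerm 4 c 2 3 + (3 / 4 : ℂ) • 1 := by
  have hγ := hc.isMajoranaFamily
  have h0 : heisenbergProj (c ∘ chainIndex) 0 =
      negProj (pairParity (majA 4 c 0) (majB 4 c 1)) *
        negProj (pairParity (majA 4 c 1) (majB 4 c 0)) := by
    simp [heisenbergProj, chainParity, chainIndex, majA, majB]
  have h1 : heisenbergProj (c ∘ chainIndex) 1 =
      negProj (pairParity (majA 4 c 1) (majB 4 c 2)) *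
        negProj (pairParity (majA 4 c 2) (majB 4 c 1)) := by
    have h25 : pairParity (c 5) (c 2) = -pairParity (c 2) (c 5) := hγ.pairParity_swap (by decide)
    have h34 : pairParity (c 4) (c 3) = -pairParity (c 3) (c 4) := hγ.pairParity_swap (by decide)
    have hα := hγ.comp chainIndex.injective
    rw [heisenbergProj, (commute_negProj (hα.commute_chainParity_inl_inr _ _)).eq]
    simp [chainParity, chainIndex, majA, majB, h25, h34]
  have h2 : heisenbergProj (c ∘ chainIndex) 2 =
      negProj (pairParity (majA 4 c 2) (majB 4 c 3)) *
        negProj (pairParity (majA 4 c 3) (majB 4 c 2)) := by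
    simp [heisenbergProj, chainParity, chainIndex, majA, majB]
  rw [Fin.sum_univ_three, h0, h1, h2, bondTerm_eq_negProj_mul_negProj hc (by decide),
    bondTerm_eq_negProj_mul_negProj hc (by decide), bondTerm_eq_negProj_mul_negProj hc (by decide)]
  module

theorem covariance_mul_transpose_of_bondTerm_mulVec
    {c : Fin (2 * 4) → Matrix (Fin (2 ^ 4)) (Fin (2 ^ 4)) ℂ} (hc : IsMajorana 4 c)
    {ψ : Fin (2 ^ 4) → ℂ} (hψ : star ψ ⬝ᵥ ψ = 1) {y : ℝ} (hy : y ^ 2 = y + 1 / 2)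
    (h : (bondTerm 4 c 0 1 + bondTerm 4 c 1 2 + bondTerm 4 c 2 3) *ᵥ ψ =
      ((y + 1 / 4 : ℝ) : ℂ) • ψ) :
    covariance ψ c * (covariance ψ c)ᵀ = (((4 * y + 3) / 9 : ℝ) : ℂ) • 1 := by
  have hy' : (y : ℂ) ^ 2 = y + 1 / 2 := by
    simpa using congrArg Complex.ofReal hy
  have hv : (∑ i, heisenbergProj (c ∘ chainIndex) i) *ᵥ ψ = (1 + y : ℂ) • ψ := by
    rw [sum_heisenbergProj_comp_chainIndex hc, add_mulVec, h, smul_mulVec, one_mulVec]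
    push_cast
    module
  have hcov := (hc.isMajoranaFamily.comp chainIndex.injective).covariance_mul_transpose_heisenberg
    hy' hv (Complex.conj_ofReal y) hψ
  rw [covariance_mul_transpose_of_comp_equiv chainIndex hcov]
  push_cast
  rfl

end Heisenberg

lemma mul_transpose_eq_smul_one_of_map_ofReal {ι : Type*} [Fintype ι] [DecidableEq ι]
    {Γ : Matrix ι ι ℝ} {s : ℝ}
    (h : Γ.map Complex.ofReal * (Γ.map Complex.ofReal)ᵀ = (s : ℂ) • 1) : Γ * Γᵀ = s • 1 := by
  refine map_injective Complex.ofReal_injective ?_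
  calc (Γ * Γᵀ).map Complex.ofReal
    _ = Γ.map Complex.ofReal * (Γ.map Complex.ofReal)ᵀ := Complex.ofRealHom.mapMatrix.map_mul Γ Γᵀ
    _ = (s : ℂ) • 1 := h
    _ = (s • 1 : Matrix ι ι ℝ).map Complex.ofReal := by
      rw [Matrix.map_smul' _ _ _ Complex.ofReal_mul]
      simp

lemma half_one_add_sqrt_three_sq : ((1 + √3) / 2) ^ 2 = (1 + √3) / 2 + 1 / 2 := by
  have h : √3 ^ 2 = 3 := Real.sq_sqrt zero_le_three
  linear_combination h / 4

/-- the top eigenstate of the 4-mode fermionic Hamiltonian (the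
Jordan-Wigner image of the 4-qubit Heisenberg chain) has covariance matrix with
`Γ Γᵀ = s·1`, `s = (5 + 2√3)/9 < 1`, hence is not a fermionic Gaussian state. -/
theorem heisenberg_top_state_covariance
    (c : Fin (2*4) → Matrix (Fin (2^4)) (Fin (2^4)) ℂ) (hc : IsMajorana 4 c)
    (H : Matrix (Fin (2^4)) (Fin (2^4)) ℂ)
    (hH : H = (-(1/2 : ℂ)) • ((ann 4 c 0)ᴴ * ann 4 c 1 + (ann 4 c 1)ᴴ * ann 4 c 0
          + (ann 4 c 1)ᴴ * ann 4 c 2 + (ann 4 c 2)ᴴ * ann 4 c 1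
          + (ann 4 c 2)ᴴ * ann 4 c 3 + (ann 4 c 3)ᴴ * ann 4 c 2)
        + (((1:ℂ)/4) • 1 - num 4 c 0 * num 4 c 1)
        + (((1:ℂ)/4) • 1 - num 4 c 1 * num 4 c 2)
        + (((1:ℂ)/4) • 1 - num 4 c 2 * num 4 c 3)
        + ((1:ℂ)/2) • (num 4 c 0 - ((1:ℂ)/2) • 1)
        + (num 4 c 1 - ((1:ℂ)/2) • 1)
        + (num 4 c 2 - ((1:ℂ)/2) • 1)
        + ((1:ℂ)/2) • (num 4 c 3 - ((1:ℂ)/2) • 1))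
    (hmax : IsGreatest {x : ℝ | (x : ℂ) ∈ spectrum ℂ H} ((3 + 2 * Real.sqrt 3) / 4))
    (ψ : Fin (2^4) → ℂ) (hψ : star ψ ⬝ᵥ ψ = 1)
    (heig : H.mulVec ψ = (((3 + 2 * Real.sqrt 3) / 4 : ℝ) : ℂ) • ψ)
    (Γ : Matrix (Fin (2*4)) (Fin (2*4)) ℝ)
    (hΓ : ∀ j k, ((Γ j k : ℝ) : ℂ)
        = (Complex.I / 2) * (star ψ ⬝ᵥ ((c j * c k - c k * c j).mulVec ψ))) :
    Γ * Γᵀ = ((5 + 2 * Real.sqrt 3) / 9) • 1 ∧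
    ¬ IsGaussianState 4 c (vecMulVec ψ (star ψ)) := by
  have hHbond : H = bondTerm 4 c 0 1 + bondTerm 4 c 1 2 + bondTerm 4 c 2 3 := by
    rw [hH]
    simp only [bondTerm]
    module
  have hcov : covariance ψ c * (covariance ψ c)ᵀ = (((5 + 2 * √3) / 9 : ℝ) : ℂ) • 1 := by
    have hlam : (1 + √3) / 2 + 1 / 4 = (3 + 2 * √3) / 4 := by ring
    have hs : (4 * ((1 + √3) / 2) + 3) / 9 = (5 + 2 * √3) / 9 := by ring
    rw [← hs]
    exact covariance_mul_transpose_of_bondTerm_mulVec hc hψ half_one_add_sqrt_three_sq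
      (by rw [← hHbond, heig, hlam])
  have hΓcov : covariance ψ c = Γ.map Complex.ofReal := ext fun i j ↦ (hΓ i j).symm
  have hΓs := mul_transpose_eq_smul_one_of_map_ofReal (hΓcov ▸ hcov)
  refine ⟨hΓs, fun hG ↦ ?_⟩
  have hΓ1 : Γ * Γᵀ = (1 : ℝ) • 1 := mul_transpose_eq_smul_one_of_map_ofReal <| by
    rw [← hΓcov, hG.covariance_mul_transpose_eq_one hc hψ, Complex.ofReal_one, one_smul]
  have hs1 : (5 + 2 * √3) / 9 = 1 := smul_left_injective ℝ one_ne_zero (hΓs.symm.trans hΓ1)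
  have h2 : √3 = 2 := by linarith
  rw [Real.sqrt_eq_iff_mul_self_eq zero_le_three zero_le_two] at h2
  norm_num at h2

end
end

section
/- Let c_1, …, c_8 ∈ ℂ^{16 × 16} be Majorana operators (n = 4), let a_k = (c_{2k−1} + i c_{2k})/2 and n_k = a_k† a_k, and let H = −(1/2)·Σ_{i=1}^{3}(a_i† a_{i+1} + a_{i+1}† a_i) + Σ_{i=1}^{3}(1/4 − n_i n_{i+1}) + (1/2)(n_1 − 1/2) + (n_2 − 1/2) + (n_3 − 1/2) + (1/2)(n_4 − 1/2). Then for every fermionic Gaussian state ρ, tr(ρ H) ≤ 0.99904 · λ_max(H). -/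
open Matrix
open scoped ComplexOrder

noncomputable section

/-!
The commutator of a Gaussian state with a Majorana operator is an anticommutator with a linear
combination of Majorana operators. The coefficients form `-i G` with `G` a real antisymmetric
contraction, and cyclicity of the trace then gives Wick's rule for the two- and four-point
functions. The energy is therefore a quadratic polynomial in `G`. Its hopping terms live on the
two staggered paths `a₀ b₁ a₂ b₃` and `b₀ a₁ b₂ a₃` through the Majorana operators
`a_j = c_{2j}`, `b_j = c_{2j+1}`; weighting the bounds `‖G v‖ ≤ ‖v‖` for basis vectors and sums
of two of them along each path bounds the energy by `1.6144`. On the other hand the two-particle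
sector contains an eigenvector with eigenvalue `(3 + 2 √3) / 4 ≈ 1.6160`.
-/

open Fintype (linearCombination)

/-! ### Clifford families and their linear combinations -/

section Clifford

variable {ι κ A : Type*} [Ring A]

/-- Generators of a Clifford algebra: a family of anticommuting square roots of `1`. Unlike
`IsMajorana`, it lives in an arbitrary ring and carries no Hermiticity. -/
def IsClifford [DecidableEq ι] (c : ι → A) : Prop :=
  ∀ i j, c i * c j + c j * c i = if i = j then 2 else 0

namespace IsClifford

variable [DecidableEq ι] [DecidableEq κ] {c : ι → A}

lemma mul_eq_neg_mul (hc : IsClifford c) {i j : ι} (hij : i ≠ j) : c i * c j = -(c j * c i) :=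
  eq_neg_of_add_eq_zero_left (by rw [hc, if_neg hij])

lemma comp_injective (hc : IsClifford c) {e : κ → ι} (he : Function.Injective e) :
    IsClifford (c ∘ e) := fun i j => by
  simp only [Function.comp_apply, hc (e i) (e j), he.eq_iff]

variable [Algebra ℂ A]

lemma mul_self (hc : IsClifford c) (i : ι) : c i * c i = 1 := by
  have h : (2 : ℂ) • (c i * c i) = (2 : ℂ) • (1 : A) := by
    simpa only [two_smul, one_add_one_eq_two, if_true] using hc i i
  exact smul_right_injective A two_ne_zero h

variable [Fintype ι]

lemma linearCombination_anticomm (hc : IsClifford c) (v w : ι → ℂ) :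
    linearCombination ℂ c v * linearCombination ℂ c w
      + linearCombination ℂ c w * linearCombination ℂ c v = (v ⬝ᵥ w) • (2 : A) :=
  calc _ = ∑ i, ∑ j, (v i * w j) • (c i * c j + c j * c i) := by
        simp only [Fintype.linearCombination_apply, Finset.sum_mul_sum, smul_mul_smul_comm,
          smul_add, Finset.sum_add_distrib]
        congr 1
        rw [Finset.sum_comm]
        simp only [mul_comm]
    _ = (v ⬝ᵥ w) • (2 : A) := by
        simp only [hc _ _, smul_ite, smul_zero, Finset.sum_ite_eq, Finset.mem_univ, if_true,
          ← Finset.sum_smul, dotProduct]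

lemma rotate (hc : IsClifford c) {R : Matrix κ ι ℂ} (hR : R * Rᵀ = 1) :
    IsClifford fun i => linearCombination ℂ c (R i) := fun i j => by
  have hij : R i ⬝ᵥ R j = if i = j then 1 else 0 := congrFun₂ hR i j
  rw [hc.linearCombination_anticomm, hij, ite_smul, one_smul, zero_smul]

end IsClifford

/-! ### Covariance matrices -/

variable [Algebra ℂ A] [Fintype ι] [Fintype κ]

lemma linearCombination_vecMul (c : ι → A) (v : κ → ℂ) (R : Matrix κ ι ℂ) :
    linearCombination ℂ c (v ᵥ* R) = ∑ i, v i • linearCombination ℂ c (R i) := by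
  simp only [vecMul_eq_sum, map_sum, map_smul]

/-- `Γ` is a covariance matrix of `ρ` with respect to the family `c`: commutators of `ρ` with
the generators are expressed through anticommutators. When `c` is a Clifford family and
`tr ρ = 1`, the off-diagonal entries of `Γ` are the two-point functions `tr (ρ c_i c_j)`. -/
def HasCovariance (c : ι → A) (ρ : A) (Γ : Matrix ι ι ℂ) : Prop :=
  ∀ i, ρ * c i - c i * ρ =
    ρ * linearCombination ℂ c (Γ i) + linearCombination ℂ c (Γ i) * ρ

namespace HasCovariance

variable {c : ι → A} {ρ : A} {Γ : Matrix ι ι ℂ}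

lemma smul (h : HasCovariance c ρ Γ) (z : ℂ) : HasCovariance c (z • ρ) Γ := fun i => by
  simp only [smul_mul_assoc, mul_smul_comm, ← smul_sub, ← smul_add, h i]

lemma commutator_linearCombination (h : HasCovariance c ρ Γ) (v : ι → ℂ) :
    ρ * linearCombination ℂ c v - linearCombination ℂ c v * ρ
      = ρ * linearCombination ℂ c (v ᵥ* Γ) + linearCombination ℂ c (v ᵥ* Γ) * ρ := by
  simp only [linearCombination_vecMul, Fintype.linearCombination_apply ℂ c v, Finset.mul_sum,
    Finset.sum_mul, mul_smul_comm, smul_mul_assoc, ← Finset.sum_sub_distrib,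
    ← Finset.sum_add_distrib, ← smul_sub, ← smul_add, h _]

lemma of_rotate [DecidableEq ι] {R : Matrix κ ι ℂ} (hR : Rᵀ * R = 1) {Γ : Matrix κ κ ℂ}
    (h : HasCovariance (fun i => linearCombination ℂ c (R i)) ρ Γ) :
    HasCovariance c ρ (Rᵀ * Γ * R) := fun i => by
  have hd (v : κ → ℂ) : linearCombination ℂ (fun i => linearCombination ℂ c (R i)) v
      = linearCombination ℂ c (v ᵥ* R) := by
    rw [linearCombination_vecMul, Fintype.linearCombination_apply]
  have hi : linearCombination ℂ c (Rᵀ i ᵥ* R) = c i := by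
    rw [← mul_apply_eq_vecMul, hR]
    simp [Fintype.linearCombination_apply, Matrix.one_apply]
  have hv := h.commutator_linearCombination (Rᵀ i)
  rwa [hd, hd, hi, ← mul_apply_eq_vecMul, ← mul_apply_eq_vecMul] at hv

end HasCovariance

end Clifford

/-! ### Products of pair factors -/

section PairProduct

variable {κ A : Type*} [Ring A] [Algebra ℂ A]

lemma commutator_sandwich {L N e f p : A} {s : ℂ} (heL : Commute e L) (heN : Commute e N)
    (hfL : Commute f L) (hfN : Commute f N) (hp : p * e - e * p = s • (p * f + f * p)) :
    (L * p * N) * e - e * (L * p * N) = s • ((L * p * N) * f + f * (L * p * N)) := by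
  have right {x : A} (hx : Commute x N) : (L * p * N) * x = L * (p * x) * N := by
    simp only [mul_assoc, hx.eq]
  have left {x : A} (hx : Commute x L) : x * (L * p * N) = L * (x * p) * N := by
    simp only [← mul_assoc, hx.eq]
  rw [right heN, right hfN, left heL, left hfL, ← sub_mul, ← mul_sub, hp, ← add_mul, ← mul_add,
    mul_smul_comm, smul_mul_assoc]

/-- The unnormalised one-mode Gaussian factor `1 + t_j e_j f_j` of the pair of generators
`e_j = d (inl j)` and `f_j = d (inr j)`. -/
def pairFactor (d : κ ⊕ κ → A) (t : κ → ℂ) (j : κ) : A :=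
  1 + t j • (d (.inl j) * d (.inr j))

variable [DecidableEq κ] {d : κ ⊕ κ → A} {t : κ → ℂ}

lemma pairFactor_commutator_inl (hd : IsClifford d) (j : κ) :
    pairFactor d t j * d (.inl j) - d (.inl j) * pairFactor d t j
      = (-t j) • (pairFactor d t j * d (.inr j) + d (.inr j) * pairFactor d t j) := by
  have hfe := hd.mul_eq_neg_mul (Sum.inr_ne_inl (a := j) (b := j))
  have h₁ : d (.inl j) * d (.inr j) * d (.inl j) = -d (.inr j) := by
    rw [mul_assoc, hfe, mul_neg, ← mul_assoc, hd.mul_self, one_mul]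
  have h₂ : d (.inl j) * (d (.inl j) * d (.inr j)) = d (.inr j) := by
    rw [← mul_assoc, hd.mul_self, one_mul]
  have h₃ : d (.inr j) * (d (.inl j) * d (.inr j)) = -d (.inl j) := by
    rw [← mul_assoc, hfe, neg_mul, mul_assoc, hd.mul_self, mul_one]
  have h₄ : d (.inl j) * d (.inr j) * d (.inr j) = d (.inl j) := by
    rw [mul_assoc, hd.mul_self, mul_one]
  simp only [pairFactor, add_mul, mul_add, one_mul, mul_one, smul_mul_assoc, mul_smul_comm,
    h₁, h₂, h₃, h₄]
  module

lemma pairFactor_comp_swap (hd : IsClifford d) (j : κ) :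
    pairFactor (d ∘ Sum.swap) (-t) j = pairFactor d t j := by
  simp only [pairFactor, Function.comp_apply, Sum.swap_inl, Sum.swap_inr, Pi.neg_apply,
    hd.mul_eq_neg_mul Sum.inr_ne_inl, smul_neg, neg_smul, neg_neg]

lemma pairFactor_commutator_inr (hd : IsClifford d) (j : κ) :
    pairFactor d t j * d (.inr j) - d (.inr j) * pairFactor d t j
      = t j • (pairFactor d t j * d (.inl j) + d (.inl j) * pairFactor d t j) := by
  have h := pairFactor_commutator_inl (t := -t)
    (hd.comp_injective (Sum.swap_leftInverse (α := κ) (β := κ)).injective) j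
  simpa only [pairFactor_comp_swap hd, Function.comp_apply, Sum.swap_inl, Sum.swap_inr,
    Pi.neg_apply, neg_neg] using h

lemma commute_pairFactor (hd : IsClifford d) {i : κ ⊕ κ} {j : κ} (hl : i ≠ .inl j)
    (hr : i ≠ .inr j) : Commute (d i) (pairFactor d t j) := by
  have h : d i * (d (.inl j) * d (.inr j)) = d (.inl j) * d (.inr j) * d i := by
    rw [← mul_assoc, hd.mul_eq_neg_mul hl, neg_mul, mul_assoc, hd.mul_eq_neg_mul hr, mul_neg,
      neg_neg, mul_assoc]
  exact (Commute.one_right _).add_right (Commute.smul_right h _)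

lemma commute_pairFactor_prod (hd : IsClifford d) {i : κ ⊕ κ} {l : List κ}
    (hi : ∀ j ∈ l, i ≠ .inl j ∧ i ≠ .inr j) :
    Commute (d i) (l.map (pairFactor d t)).prod :=
  Commute.list_prod_right _ _ fun _ hx => by
    obtain ⟨j, hj, rfl⟩ := List.mem_map.mp hx
    exact commute_pairFactor hd (hi j hj).1 (hi j hj).2

/-- The antisymmetric matrix with a block `[[0, x_j], [-x_j, 0]]` for each mode `j`. -/
def pairMatrix {R : Type*} [Zero R] [Neg R] (x : κ → R) : Matrix (κ ⊕ κ) (κ ⊕ κ) R :=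
  fromBlocks 0 (diagonal x) (-diagonal x) 0

lemma linearCombination_pairMatrix_inl [Fintype κ] (d : κ ⊕ κ → A) (x : κ → ℂ) (j : κ) :
    linearCombination ℂ d (pairMatrix x (.inl j)) = x j • d (.inr j) := by
  simp [Fintype.linearCombination_apply, pairMatrix, diagonal_apply]

lemma linearCombination_pairMatrix_inr [Fintype κ] (d : κ ⊕ κ → A) (x : κ → ℂ) (j : κ) :
    linearCombination ℂ d (pairMatrix x (.inr j)) = -x j • d (.inl j) := by
  simp [Fintype.linearCombination_apply, pairMatrix, diagonal_apply]

lemma hasCovariance_pairFactor_prod [Fintype κ] (hd : IsClifford d) {l : List κ}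
    (hl : l.Nodup) (hmem : ∀ j, j ∈ l) :
    HasCovariance d (l.map (pairFactor d t)).prod (pairMatrix (-t)) := by
  have split (j : κ) : ∃ l₁ l₂ : List κ,
      (l.map (pairFactor d t)).prod = (l₁.map (pairFactor d t)).prod * pairFactor d t j
        * (l₂.map (pairFactor d t)).prod ∧ j ∉ l₁ ∧ j ∉ l₂ := by
    obtain ⟨l₁, l₂, rfl⟩ := List.append_of_mem (hmem j)
    have hj := List.nodup_middle.mp hl |>.notMem
    exact ⟨l₁, l₂, by simp [mul_assoc], fun h => hj (List.mem_append_left _ h),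
      fun h => hj (List.mem_append_right _ h)⟩
  have commute {i : κ ⊕ κ} {j : κ} {l' : List κ} (hj : j ∉ l') (hi : i = .inl j ∨ i = .inr j) :
      Commute (d i) (l'.map (pairFactor d t)).prod :=
    commute_pairFactor_prod hd fun k hk => by
      rcases hi with rfl | rfl <;> simp [ne_of_mem_of_not_mem hk hj |>.symm]
  rintro (j | j) <;> obtain ⟨l₁, l₂, hprod, h₁, h₂⟩ := split j
  · rw [hprod, linearCombination_pairMatrix_inl, mul_smul_comm, smul_mul_assoc, ← smul_add]
    exact commutator_sandwich (commute h₁ (.inl rfl)) (commute h₂ (.inl rfl))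
      (commute h₁ (.inr rfl)) (commute h₂ (.inr rfl)) (pairFactor_commutator_inl hd j)
  · rw [hprod, linearCombination_pairMatrix_inr, Pi.neg_apply, neg_neg, mul_smul_comm,
      smul_mul_assoc, ← smul_add]
    exact commutator_sandwich (commute h₁ (.inr rfl)) (commute h₂ (.inr rfl))
      (commute h₁ (.inl rfl)) (commute h₂ (.inl rfl)) (pairFactor_commutator_inr hd j)

lemma trace_pairFactor_prod {m : Type*} [Fintype m] [DecidableEq m]
    {d : κ ⊕ κ → Matrix m m ℂ} (hd : IsClifford d) {l : List κ} (hl : l.Nodup) :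
    (l.map (pairFactor d t)).prod.trace = Fintype.card m := by
  induction l with
  | nil => simp
  | cons j l ih =>
    obtain ⟨hj, hl⟩ := List.nodup_cons.mp hl
    set N := (l.map (pairFactor d t)).prod
    have heN : Commute (d (.inl j)) N := commute_pairFactor_prod hd fun k hk => by
      simp [ne_of_mem_of_not_mem hk hj |>.symm]
    have htr : (d (.inl j) * d (.inr j) * N).trace = -(d (.inl j) * d (.inr j) * N).trace :=
      calc (d (.inl j) * d (.inr j) * N).trace
        _ = (d (.inr j) * N * d (.inl j)).trace := by rw [mul_assoc, trace_mul_comm]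
        _ = (d (.inr j) * d (.inl j) * N).trace := by rw [mul_assoc, ← heN.eq, mul_assoc]
        _ = -(d (.inl j) * d (.inr j) * N).trace := by
          rw [hd.mul_eq_neg_mul Sum.inr_ne_inl, neg_mul, trace_neg]
    rw [List.map_cons, List.prod_cons, pairFactor, add_mul, one_mul, smul_mul_assoc, trace_add,
      trace_smul, self_eq_neg.mp htr, smul_zero, add_zero, ih hl]

end PairProduct

/-! ### Gaussian states -/

section GaussianState

variable {n : ℕ} {c : Fin (2 * n) → Matrix (Fin (2 ^ n)) (Fin (2 ^ n)) ℂ}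

lemma IsMajorana.isClifford (hc : IsMajorana n c) : IsClifford c := fun i j => by
  rw [hc.2 i j, two_smul, one_add_one_eq_two]

/-- The bijection between modes with a label (left or right) and Majorana indices which sends
`inl j` to `2 j` and `inr j` to `2 j + 1`. -/
def majoranaIndex (n : ℕ) : Fin n ⊕ Fin n ≃ Fin (2 * n) :=
  Equiv.ofBijective
    (Sum.elim (fun j => ⟨2 * j, by have := j.isLt; omega⟩)
      fun j => ⟨2 * j + 1, by have := j.isLt; omega⟩) <| by
    refine (Fintype.bijective_iff_injective_and_card _).mpr ⟨?_, by simp [two_mul]⟩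
    rintro (i | i) (j | j) h <;>
      simp only [Sum.elim_inl, Sum.elim_inr, Sum.inl.injEq, Sum.inr.injEq,
        Fin.ext_iff] at h ⊢ <;> omega

/-- The Majorana operators sorted into the two operators `majA`, `majB` of each mode. -/
def majPair (n : ℕ) (c : Fin (2 * n) → Matrix (Fin (2 ^ n)) (Fin (2 ^ n)) ℂ) :
    Fin n ⊕ Fin n → Matrix (Fin (2 ^ n)) (Fin (2 ^ n)) ℂ :=
  c ∘ majoranaIndex n

lemma majPair_inl (j : Fin n) : majPair n c (.inl j) = majA n c j := rfl

lemma majPair_inr (j : Fin n) : majPair n c (.inr j) = majB n c j := rfl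

lemma IsMajorana.isClifford_majPair (hc : IsMajorana n c) : IsClifford (majPair n c) :=
  hc.isClifford.comp_injective (majoranaIndex n).injective

lemma gaussOf_eq_smul_pairFactor_prod (c : Fin (2 * n) → Matrix (Fin (2 ^ n)) (Fin (2 ^ n)) ℂ)
    (lam : Fin n → ℝ) (R : Matrix (Fin (2 * n)) (Fin (2 * n)) ℝ) :
    gaussOf n c lam R = ((2 : ℂ) ^ n)⁻¹ • ((List.finRange n).map (pairFactor
      (fun i => linearCombination ℂ (majPair n c)
        ((R.submatrix (majoranaIndex n) (majoranaIndex n)).map Complex.ofRealHom i))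
      fun j => Complex.I * lam j)).prod := by
  have hrow (i : Fin n ⊕ Fin n) : linearCombination ℂ (majPair n c)
      ((R.submatrix (majoranaIndex n) (majoranaIndex n)).map Complex.ofRealHom i)
      = ∑ k, (R (majoranaIndex n i) k : ℂ) • c k :=
    (majoranaIndex n).sum_comp fun k => (R (majoranaIndex n i) k : ℂ) • c k
  simp only [gaussOf, hrow]
  rfl

lemma transpose_pairMatrix {κ R : Type*} [DecidableEq κ] [AddCommGroup R] (x : κ → R) :
    (pairMatrix x)ᵀ = -pairMatrix x := by
  simp [pairMatrix, fromBlocks_transpose, fromBlocks_neg]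

lemma pairMatrix_transpose_mul_self {κ R : Type*} [Fintype κ] [DecidableEq κ] [CommRing R]
    (x : κ → R) :
    (pairMatrix x)ᵀ * pairMatrix x = diagonal (Sum.elim (x ^ 2) (x ^ 2)) := by
  rw [transpose_pairMatrix, pairMatrix, fromBlocks_neg, fromBlocks_multiply, ← fromBlocks_diagonal]
  simp [sq, Pi.mul_def]

/-- `G` is a real antisymmetric contraction, as the real covariance matrix of any fermionic
state is. The contraction property is encoded as `Gᵀ G ≤ 1`. -/
structure IsSkewContraction {ι : Type*} [Fintype ι] [DecidableEq ι] (G : Matrix ι ι ℝ) :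
    Prop where
  transpose_eq : Gᵀ = -G
  posSemidef : (1 - Gᵀ * G).PosSemidef

lemma isSkewContraction_pairMatrix {κ : Type*} [Fintype κ] [DecidableEq κ] {x : κ → ℝ}
    (hx : ∀ j, x j ∈ Set.Icc (-1 : ℝ) 1) : IsSkewContraction (pairMatrix x) where
  transpose_eq := transpose_pairMatrix x
  posSemidef := by
    rw [pairMatrix_transpose_mul_self, ← diagonal_one, diagonal_sub]
    refine PosSemidef.diagonal ?_
    rintro (j | j) <;> simpa [abs_le] using hx j

lemma IsSkewContraction.conj {ι : Type*} [Fintype ι] [DecidableEq ι] {G R : Matrix ι ι ℝ}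
    (hG : IsSkewContraction G) (hR : R * Rᵀ = 1) : IsSkewContraction (Rᵀ * G * R) where
  transpose_eq := by
    simp only [transpose_mul, transpose_transpose, hG.transpose_eq, Matrix.mul_neg,
      Matrix.neg_mul, mul_assoc]
  posSemidef := by
    have h : 1 - (Rᵀ * G * R)ᵀ * (Rᵀ * G * R) = Rᵀ * (1 - Gᵀ * G) * R := by
      have hR' : R * (Rᵀ * (G * R)) = G * R := by rw [← mul_assoc, hR, one_mul]
      simp only [transpose_mul, transpose_transpose, mul_sub, sub_mul, mul_one, mul_assoc, hR',
        mul_eq_one_comm.mp hR]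
    rw [h]
    exact hG.posSemidef.conjTranspose_mul_mul_same R

theorem IsGaussianState.exists_hasCovariance (hc : IsMajorana n c)
    {ρ : Matrix (Fin (2 ^ n)) (Fin (2 ^ n)) ℂ} (hρ : IsGaussianState n c ρ) :
    ρ.trace = 1 ∧ ∃ G : Matrix (Fin n ⊕ Fin n) (Fin n ⊕ Fin n) ℝ, IsSkewContraction G ∧
      HasCovariance (majPair n c) ρ (-Complex.I • G.map Complex.ofRealHom) := by
  obtain ⟨lam, R, hlam, hR, -, rfl⟩ := hρ
  rw [gaussOf_eq_smul_pairFactor_prod]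
  set S := R.submatrix (majoranaIndex n) (majoranaIndex n)
  have hS : S * Sᵀ = 1 := by
    rw [transpose_submatrix, submatrix_mul_equiv, hR, submatrix_one_equiv]
  have hSC : S.map Complex.ofRealHom * (S.map Complex.ofRealHom)ᵀ = 1 := by
    rw [← transpose_map, ← Matrix.map_mul, hS, Matrix.map_one _ (map_zero _) (map_one _)]
  have hd := hc.isClifford_majPair.rotate hSC
  refine ⟨?_, Sᵀ * pairMatrix lam * S, (isSkewContraction_pairMatrix hlam).conj hS, ?_⟩
  · simp [trace_pairFactor_prod hd (List.nodup_finRange n)]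
  · have hcov := (hasCovariance_pairFactor_prod (t := fun j => Complex.I * lam j) hd
      (List.nodup_finRange n) List.mem_finRange).smul ((2 : ℂ) ^ n)⁻¹
    have hΓ : pairMatrix (-fun j => Complex.I * (lam j : ℂ))
        = -Complex.I • (pairMatrix lam).map Complex.ofRealHom := by
      ext (i | i) (j | j) <;> by_cases h : i = j <;> simp [pairMatrix, h]
    have h := hcov.of_rotate (mul_eq_one_comm.mp hSC)
    rwa [hΓ, mul_smul_comm, smul_mul_assoc, ← transpose_map, ← Matrix.map_mul,
      ← Matrix.map_mul] at h

end GaussianState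

/-! ### Wick's rule -/

namespace HasCovariance

variable {ι m : Type*} [Fintype ι] [Fintype m] [DecidableEq m] {c : ι → Matrix m m ℂ}
  {ρ : Matrix m m ℂ} {Γ : Matrix ι ι ℂ}

lemma trace_commutator (h : HasCovariance c ρ Γ) (i : ι) (X : Matrix m m ℂ) :
    (ρ * (c i * X - X * c i)).trace = ∑ j, Γ i j * (ρ * (c j * X + X * c j)).trace := by
  have cyclic (y : Matrix m m ℂ) : (ρ * (X * y)).trace = (y * ρ * X).trace := by
    rw [← mul_assoc, trace_mul_comm, mul_assoc]
  calc (ρ * (c i * X - X * c i)).trace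
    _ = ((ρ * c i - c i * ρ) * X).trace := by
      rw [mul_sub, trace_sub, cyclic, sub_mul, trace_sub, mul_assoc ρ]
    _ = (ρ * (linearCombination ℂ c (Γ i) * X + X * linearCombination ℂ c (Γ i))).trace := by
      rw [h i, mul_add, trace_add, cyclic, add_mul, trace_add, mul_assoc ρ]
    _ = ∑ j, Γ i j * (ρ * (c j * X + X * c j)).trace := by
      simp only [Fintype.linearCombination_apply, Finset.sum_mul, Finset.mul_sum,
        smul_mul_assoc, mul_smul_comm, ← Finset.sum_add_distrib, ← smul_add, trace_sum,
        trace_smul, smul_eq_mul]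

variable [DecidableEq ι]

theorem trace_mul_mul (h : HasCovariance c ρ Γ) (hc : IsClifford c) (hρ : ρ.trace = 1)
    {i k : ι} (hik : i ≠ k) : (ρ * (c i * c k)).trace = Γ i k := by
  have hcomm := h.trace_commutator i (c k)
  have hanti : c i * c k - c k * c i = (2 : ℂ) • (c i * c k) := by
    rw [hc.mul_eq_neg_mul hik.symm, sub_neg_eq_add, two_smul]
  have hX (j : ι) : c j * c k + c k * c j = if j = k then (2 : ℂ) • 1 else 0 := by
    rw [hc j k, two_smul, one_add_one_eq_two]
  simp only [hanti, hX, mul_smul_comm, trace_smul, smul_eq_mul, mul_ite, mul_one, mul_zero,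
    apply_ite trace, trace_zero, hρ, Finset.sum_ite_eq', Finset.mem_univ, if_true] at hcomm
  linear_combination hcomm / 2

theorem trace_mul_mul_mul_mul (h : HasCovariance c ρ Γ) (hc : IsClifford c) (hρ : ρ.trace = 1)
    {i k l p : ι} (hik : i ≠ k) (hil : i ≠ l) (hip : i ≠ p) (hkl : k ≠ l) (hkp : k ≠ p)
    (hlp : l ≠ p) :
    (ρ * (c i * (c k * c l * c p))).trace
      = Γ i k * Γ l p - Γ i l * Γ k p + Γ i p * Γ k l := by
  have hcomm := h.trace_commutator i (c k * c l * c p)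
  have hanti : c i * (c k * c l * c p) - c k * c l * c p * c i
      = (2 : ℂ) • (c i * (c k * c l * c p)) := by
    have : c k * c l * c p * c i = -(c i * (c k * c l * c p)) := by
      rw [mul_assoc, hc.mul_eq_neg_mul hip.symm, mul_neg, ← mul_assoc, mul_assoc (c k),
        hc.mul_eq_neg_mul hil.symm, mul_neg, neg_mul, ← mul_assoc, hc.mul_eq_neg_mul hik.symm]
      simp only [neg_mul, neg_neg, mul_assoc]
    rw [this, sub_neg_eq_add, two_smul]
  have hX (j : ι) : c j * (c k * c l * c p) + c k * c l * c p * c j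
      = (if j = k then (2 : ℂ) • (c l * c p) else 0) - (if j = l then (2 : ℂ) • (c k * c p) else 0)
        + if j = p then (2 : ℂ) • (c k * c l) else 0 := by
    have derivation : c j * (c k * c l * c p) + c k * c l * c p * c j
        = (c j * c k + c k * c j) * (c l * c p) - c k * (c j * c l + c l * c j) * c p
          + c k * c l * (c j * c p + c p * c j) := by noncomm_ring
    rw [derivation, hc j k, hc j l, hc j p]
    simp only [ite_mul, mul_ite, zero_mul, mul_zero, two_smul, two_mul, mul_two, add_mul]
  simp only [hanti, hX, mul_add, mul_sub, mul_smul_comm, trace_add, trace_sub, trace_smul,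
    smul_eq_mul, mul_ite, mul_zero, apply_ite trace, trace_zero, Finset.sum_add_distrib,
    Finset.sum_sub_distrib, Finset.sum_ite_eq', Finset.mem_univ, if_true,
    h.trace_mul_mul hc hρ hkl, h.trace_mul_mul hc hρ hkp, h.trace_mul_mul hc hρ hlp] at hcomm
  linear_combination hcomm / 2

end HasCovariance

/-! ### The Heisenberg chain and its energy -/

section Chain

variable {A : Type*} [Ring A] [StarRing A] [Algebra ℂ A]

/-- The interaction of two neighbouring modes with annihilation operators `a` and `a'`. -/
def heisenbergBond (a a' : A) : A :=
  -((1 / 2 : ℂ) • (star a * a' + star a' * a))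
    - (star a * a - (1 / 2 : ℂ) • 1) * (star a' * a' - (1 / 2 : ℂ) • 1)

/-- The open chain of `n + 1` modes with interaction `heisenbergBond`. Expanding the products
of number operators turns the chemical potential of an inner mode into twice that of a mode
at the boundary. -/
def heisenbergChain {n : ℕ} (a : Fin (n + 1) → A) : A :=
  ∑ i : Fin n, heisenbergBond (a i.castSucc) (a i.succ)

lemma heisenbergChain_four (a : Fin 4 → A) :
    heisenbergChain a
      = heisenbergBond (a 0) (a 1) + heisenbergBond (a 1) (a 2) + heisenbergBond (a 2) (a 3) :=
  Fin.sum_univ_three _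

lemma heisenbergBond_eq (a a' : A) :
    heisenbergBond a a' = -((1 / 2 : ℂ) • (star a * a' + star a' * a))
      + ((1 / 4 : ℂ) • 1 - star a * a * (star a' * a'))
      + (1 / 2 : ℂ) • (star a * a - (1 / 2 : ℂ) • 1)
      + (1 / 2 : ℂ) • (star a' * a' - (1 / 2 : ℂ) • 1) := by
  simp only [heisenbergBond, sub_mul, mul_sub, smul_mul_assoc, mul_smul_comm, one_mul, mul_one]
  module

end Chain

section Energy

variable {n : ℕ} {c : Fin (2 * n) → Matrix (Fin (2 ^ n)) (Fin (2 ^ n)) ℂ}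

lemma IsMajorana.star_ann (hc : IsMajorana n c) (i : Fin n) :
    star (ann n c i)
      = (1 / 2 : ℂ) • (majPair n c (.inl i) - Complex.I • majPair n c (.inr i)) := by
  have hA : star (majA n c i) = majPair n c (.inl i) := hc.1 _
  have hB : star (majB n c i) = majPair n c (.inr i) := hc.1 _
  rw [ann, star_smul, star_add, star_smul, hA, hB]
  simp [sub_eq_add_neg]

lemma IsMajorana.star_ann_mul_ann (hc : IsMajorana n c) (i j : Fin n) :
    star (ann n c i) * ann n c j
      = (1 / 4 : ℂ) • (majPair n c (.inl i) * majPair n c (.inl j)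
        + majPair n c (.inr i) * majPair n c (.inr j)
        + Complex.I • (majPair n c (.inl i) * majPair n c (.inr j)
          - majPair n c (.inr i) * majPair n c (.inl j))) := by
  have hII : Complex.I • majPair n c (.inr i) * Complex.I • majPair n c (.inr j)
      = -(majPair n c (.inr i) * majPair n c (.inr j)) := by
    rw [smul_mul_smul_comm, Complex.I_mul_I, neg_one_smul]
  rw [hc.star_ann, ann, ← majPair_inl, ← majPair_inr, smul_mul_smul_comm, sub_mul, mul_add,
    mul_add, hII, mul_smul_comm, smul_mul_assoc]
  module

lemma IsMajorana.star_ann_mul_self_sub_half (hc : IsMajorana n c) (i : Fin n) :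
    star (ann n c i) * ann n c i - (1 / 2 : ℂ) • 1
      = (Complex.I / 2) • (majPair n c (.inl i) * majPair n c (.inr i)) := by
  rw [hc.star_ann_mul_ann, hc.isClifford_majPair.mul_self, hc.isClifford_majPair.mul_self,
    hc.isClifford_majPair.mul_eq_neg_mul (Sum.inr_ne_inl (a := i) (b := i))]
  module

lemma IsMajorana.star_ann_mul_ann_add_swap (hc : IsMajorana n c) {i j : Fin n} (hij : i ≠ j) :
    star (ann n c i) * ann n c j + star (ann n c j) * ann n c i
      = (Complex.I / 2) • (majPair n c (.inl i) * majPair n c (.inr j)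
        - majPair n c (.inr i) * majPair n c (.inl j)) := by
  have hd := hc.isClifford_majPair
  rw [hc.star_ann_mul_ann, hc.star_ann_mul_ann,
    hd.mul_eq_neg_mul (Sum.inl_injective.ne hij.symm),
    hd.mul_eq_neg_mul (Sum.inr_injective.ne hij.symm),
    hd.mul_eq_neg_mul (Sum.inl_ne_inr (a := j) (b := i)),
    hd.mul_eq_neg_mul (Sum.inr_ne_inl (a := i) (b := j))]
  module

lemma IsMajorana.heisenbergBond_ann (hc : IsMajorana n c) {i j : Fin n} (hij : i ≠ j) :
    heisenbergBond (ann n c i) (ann n c j)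
      = (1 / 4 : ℂ) • (Complex.I • (majPair n c (.inr i) * majPair n c (.inl j))
        - Complex.I • (majPair n c (.inl i) * majPair n c (.inr j))
        + majPair n c (.inl i)
          * (majPair n c (.inr i) * majPair n c (.inl j) * majPair n c (.inr j))) := by
  have hI : Complex.I / 2 * (Complex.I / 2) = -(1 / 4) := by
    linear_combination Complex.I_mul_I / 4
  rw [heisenbergBond, hc.star_ann_mul_ann_add_swap hij, hc.star_ann_mul_self_sub_half,
    hc.star_ann_mul_self_sub_half, smul_mul_smul_comm, hI]
  simp only [mul_assoc]
  module

/-- The energy of `heisenbergBond` for the modes `i ≠ j` of a Gaussian state with real covariance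
matrix `G`; the quadratic part comes from Wick's rule. -/
def bondEnergy {κ : Type*} (G : Matrix (κ ⊕ κ) (κ ⊕ κ) ℝ) (i j : κ) : ℝ :=
  1 / 4 * (G (.inr i) (.inl j) - G (.inl i) (.inr j)
    - (G (.inl i) (.inr i) * G (.inl j) (.inr j) - G (.inl i) (.inl j) * G (.inr i) (.inr j)
      + G (.inl i) (.inr j) * G (.inr i) (.inl j)))

/-- The energy of `heisenbergChain` in a Gaussian state with real covariance matrix `G`. -/
def chainEnergy {n : ℕ} (G : Matrix (Fin (n + 1) ⊕ Fin (n + 1)) (Fin (n + 1) ⊕ Fin (n + 1)) ℝ) :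
    ℝ :=
  ∑ i : Fin n, bondEnergy G i.castSucc i.succ

theorem IsMajorana.trace_mul_heisenbergBond (hc : IsMajorana n c)
    {ρ : Matrix (Fin (2 ^ n)) (Fin (2 ^ n)) ℂ} (hρ : ρ.trace = 1)
    {G : Matrix (Fin n ⊕ Fin n) (Fin n ⊕ Fin n) ℝ}
    (hG : HasCovariance (majPair n c) ρ (-Complex.I • G.map Complex.ofRealHom))
    {i j : Fin n} (hij : i ≠ j) :
    (ρ * heisenbergBond (ann n c i) (ann n c j)).trace = bondEnergy G i j := by
  have hd := hc.isClifford_majPair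
  rw [hc.heisenbergBond_ann hij]
  simp only [mul_smul_comm, mul_add, mul_sub, trace_smul, trace_add, trace_sub,
    hG.trace_mul_mul hd hρ Sum.inr_ne_inl, hG.trace_mul_mul hd hρ Sum.inl_ne_inr,
    hG.trace_mul_mul_mul_mul hd hρ Sum.inl_ne_inr (Sum.inl_injective.ne hij) Sum.inl_ne_inr
      Sum.inr_ne_inl (Sum.inr_injective.ne hij) Sum.inl_ne_inr,
    Matrix.smul_apply, Matrix.map_apply, smul_eq_mul, Complex.ofRealHom_eq_coe, bondEnergy]
  push_cast
  linear_combination (1 / 4 * (-G (.inr i) (.inl j) + G (.inl i) (.inr j)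
    + (G (.inl i) (.inr i) * G (.inl j) (.inr j) - G (.inl i) (.inl j) * G (.inr i) (.inr j)
      + G (.inl i) (.inr j) * G (.inr i) (.inl j))) : ℂ) * Complex.I_mul_I

theorem IsMajorana.trace_mul_heisenbergChain
    {c : Fin (2 * (n + 1)) → Matrix (Fin (2 ^ (n + 1))) (Fin (2 ^ (n + 1))) ℂ}
    (hc : IsMajorana (n + 1) c)
    {ρ : Matrix (Fin (2 ^ (n + 1))) (Fin (2 ^ (n + 1))) ℂ} (hρ : ρ.trace = 1)
    {G : Matrix (Fin (n + 1) ⊕ Fin (n + 1)) (Fin (n + 1) ⊕ Fin (n + 1)) ℝ}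
    (hG : HasCovariance (majPair (n + 1) c) ρ (-Complex.I • G.map Complex.ofRealHom)) :
    (ρ * heisenbergChain (ann (n + 1) c)).trace = chainEnergy G := by
  simp only [heisenbergChain, chainEnergy, Finset.mul_sum, trace_sum, Complex.ofReal_sum,
    hc.trace_mul_heisenbergBond hρ hG Fin.castSucc_lt_succ.ne]

end Energy

/-! ### The energy bound for skew contractions -/

section SkewContraction

variable {ι κ : Type*} [Fintype ι] [DecidableEq ι] {G : Matrix ι ι ℝ}

namespace IsSkewContraction

lemma neg (hG : IsSkewContraction G) : IsSkewContraction (-G) where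
  transpose_eq := by rw [transpose_neg, hG.transpose_eq]
  posSemidef := by simpa only [transpose_neg, neg_mul_neg] using hG.posSemidef

lemma apply_swap (hG : IsSkewContraction G) (i j : ι) : G j i = -G i j :=
  congrFun₂ hG.transpose_eq i j

lemma sum_mulVec_sq_le (hG : IsSkewContraction G) (v : ι → ℝ) :
    ∑ k, (G *ᵥ v) k ^ 2 ≤ ∑ k, v k ^ 2 := by
  have h := hG.posSemidef.dotProduct_mulVec_nonneg v
  rw [star_trivial, sub_mulVec, one_mulVec, dotProduct_sub, ← mulVec_mulVec, dotProduct_mulVec,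
    vecMul_transpose, sub_nonneg] at h
  simpa only [dotProduct, ← sq] using h

variable {e : κ → ι}

lemma sum_subset_mulVec_sq_le (hG : IsSkewContraction G) (he : Function.Injective e)
    (s : Finset κ) (v : ι → ℝ) : ∑ k ∈ s, (G *ᵥ v) (e k) ^ 2 ≤ ∑ k, v k ^ 2 :=
  calc ∑ k ∈ s, (G *ᵥ v) (e k) ^ 2
    _ = ∑ k ∈ s.map ⟨e, he⟩, (G *ᵥ v) k ^ 2 :=
      (Finset.sum_map s ⟨e, he⟩ fun k => (G *ᵥ v) k ^ 2).symm
    _ ≤ ∑ k, (G *ᵥ v) k ^ 2 :=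
      Finset.sum_le_univ_sum_of_nonneg fun _ => sq_nonneg _
    _ ≤ ∑ k, v k ^ 2 := hG.sum_mulVec_sq_le v

lemma sum_col_sq_le (hG : IsSkewContraction G) (he : Function.Injective e) (s : Finset κ)
    (i : ι) : ∑ k ∈ s, G (e k) i ^ 2 ≤ 1 := by
  simpa [Pi.single_apply] using hG.sum_subset_mulVec_sq_le he s (Pi.single i 1)

lemma sum_add_col_sq_le (hG : IsSkewContraction G) (he : Function.Injective e) (s : Finset κ)
    {i j : ι} (hij : i ≠ j) : ∑ k ∈ s, (G (e k) i + G (e k) j) ^ 2 ≤ 2 := by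
  have h := hG.sum_subset_mulVec_sq_le he s (Pi.single i 1 + Pi.single j 1)
  have hnorm : ∑ k, (Pi.single i 1 + Pi.single j 1 : ι → ℝ) k ^ 2 = 2 := by
    simp [Pi.single_apply, add_sq, Finset.sum_add_distrib, hij.symm, one_add_one_eq_two]
  rw [hnorm, mulVec_add, mulVec_single_one, mulVec_single_one] at h
  exact h

end IsSkewContraction

lemma path_polynomial_bound (x y s w : ℝ) :
    -x + s - y + (x ^ 2 + s ^ 2 + y ^ 2) / 2
      ≤ 1.1165 + (1.05 * (x ^ 2 + y ^ 2) + w ^ 2 + 1.1 * s ^ 2 + 0.2 * (x + y) * (w - s)) := by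
  nlinarith [sq_nonneg (w + 0.1 * (x + y)), sq_nonneg (s - (x + y) / 6 - 5 / 6),
    sq_nonneg ((x + y) / 2 + 0.839), sq_nonneg (x - y)]

/- The weights come from numerical optimisation of a linear combination of the column bounds of
`p 0, …, p 3` and of the bounds for the sums of the columns `p 0, p 2` and `p 1, p 3`. -/
lemma IsSkewContraction.path_bound (hG : IsSkewContraction G) {p q : Fin 4 → ι}
    (hpq : Function.Injective (Sum.elim p q)) :
    -G (p 0) (p 1) + G (p 1) (p 2) - G (p 2) (p 3)
      + (G (p 0) (p 1) ^ 2 + G (p 1) (p 2) ^ 2 + G (p 2) (p 3) ^ 2) / 2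
      + 0.4 * G (q 0) (p 0) ^ 2 + 0.45 * G (q 1) (p 1) ^ 2
      + 0.45 * G (q 2) (p 2) ^ 2 + 0.4 * G (q 3) (p 3) ^ 2
      + 0.25 * (G (q 0) (p 1) ^ 2 + G (q 1) (p 0) ^ 2 + G (q 1) (p 2) ^ 2
        + G (q 2) (p 1) ^ 2 + G (q 2) (p 3) ^ 2 + G (q 3) (p 2) ^ 2) ≤ 3.2165 := by
  have hp : Function.Injective p := fun i j h => Sum.inl_injective (hpq h)
  have col₀ : G (p 0) (p 1) ^ 2 + G (p 0) (p 3) ^ 2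
      + G (q 0) (p 0) ^ 2 + G (q 1) (p 0) ^ 2 ≤ 1 := by
    simpa [hG.apply_swap (p 0), ← add_assoc] using
      hG.sum_col_sq_le hpq {.inl 1, .inl 3, .inr 0, .inr 1} (p 0)
  have col₁ : G (p 0) (p 1) ^ 2 + G (p 1) (p 2) ^ 2
      + G (q 0) (p 1) ^ 2 + G (q 1) (p 1) ^ 2 + G (q 2) (p 1) ^ 2 ≤ 1 := by
    simpa [hG.apply_swap (p 1) (p 2), ← add_assoc] using
      hG.sum_col_sq_le hpq {.inl 0, .inl 2, .inr 0, .inr 1, .inr 2} (p 1)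
  have col₂ : G (p 1) (p 2) ^ 2 + G (p 2) (p 3) ^ 2
      + G (q 1) (p 2) ^ 2 + G (q 2) (p 2) ^ 2 + G (q 3) (p 2) ^ 2 ≤ 1 := by
    simpa [hG.apply_swap (p 2) (p 3), ← add_assoc] using
      hG.sum_col_sq_le hpq {.inl 1, .inl 3, .inr 1, .inr 2, .inr 3} (p 2)
  have col₃ : G (p 0) (p 3) ^ 2 + G (p 2) (p 3) ^ 2
      + G (q 2) (p 3) ^ 2 + G (q 3) (p 3) ^ 2 ≤ 1 := by
    simpa [← add_assoc] using hG.sum_col_sq_le hpq {.inl 0, .inl 2, .inr 2, .inr 3} (p 3)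
  have col₀₂ : (G (p 1) (p 2) - G (p 0) (p 1)) ^ 2 + (G (p 0) (p 3) + G (p 2) (p 3)) ^ 2 ≤ 2 := by
    have h := hG.sum_add_col_sq_le hp {1, 3} (hp.ne (by decide : (0 : Fin 4) ≠ 2))
    rw [Finset.sum_pair (by decide), hG.apply_swap (p 0) (p 1), hG.apply_swap (p 0) (p 3),
      hG.apply_swap (p 2) (p 3)] at h
    linarith
  have col₁₃ : (G (p 0) (p 1) + G (p 0) (p 3)) ^ 2 + (G (p 2) (p 3) - G (p 1) (p 2)) ^ 2 ≤ 2 := by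
    have h := hG.sum_add_col_sq_le hp {0, 2} (hp.ne (by decide : (1 : Fin 4) ≠ 3))
    rw [Finset.sum_pair (by decide), hG.apply_swap (p 1) (p 2)] at h
    linarith
  linarith [path_polynomial_bound (G (p 0) (p 1)) (G (p 2) (p 3)) (G (p 1) (p 2)) (G (p 0) (p 3)),
    sq_nonneg (G (q 0) (p 1)), sq_nonneg (G (q 1) (p 0)), sq_nonneg (G (q 1) (p 2)),
    sq_nonneg (G (q 2) (p 1)), sq_nonneg (G (q 2) (p 3)), sq_nonneg (G (q 3) (p 2))]

lemma cross_polynomial_bound (a b c d : ℝ) :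
    -(a * b) - b * c - c * d ≤ 0.8 * a ^ 2 + 0.9 * b ^ 2 + 0.9 * c ^ 2 + 0.8 * d ^ 2 := by
  nlinarith [sq_nonneg (1.6 * a + b), sq_nonneg (b + c), sq_nonneg (1.6 * d + c),
    sq_nonneg b, sq_nonneg c]

lemma four_mul_bondEnergy_le (G : Matrix (κ ⊕ κ) (κ ⊕ κ) ℝ) (i j : κ) :
    4 * bondEnergy G i j ≤ G (.inr i) (.inl j) - G (.inl i) (.inr j)
      + (G (.inr i) (.inl j) ^ 2 + G (.inl i) (.inr j) ^ 2) / 2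
      + (G (.inl i) (.inl j) ^ 2 + G (.inr i) (.inr j) ^ 2) / 2
      - G (.inl i) (.inr i) * G (.inl j) (.inr j) := by
  rw [bondEnergy]
  linarith [sq_nonneg (G (.inr i) (.inl j) + G (.inl i) (.inr j)),
    sq_nonneg (G (.inl i) (.inl j) - G (.inr i) (.inr j))]

theorem IsSkewContraction.chainEnergy_le {G : Matrix (Fin 4 ⊕ Fin 4) (Fin 4 ⊕ Fin 4) ℝ}
    (hG : IsSkewContraction G) : chainEnergy G ≤ 1.6144 := by
  have hP := hG.path_bound (p := ![.inl 0, .inr 1, .inl 2, .inr 3])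
    (q := ![.inr 0, .inl 1, .inr 2, .inl 3]) (by decide)
  have hQ := hG.neg.path_bound (p := ![.inr 0, .inl 1, .inr 2, .inl 3])
    (q := ![.inl 0, .inr 1, .inl 2, .inr 3]) (by decide)
  have hsq (i j : Fin 4 ⊕ Fin 4) : G j i ^ 2 = G i j ^ 2 := by rw [hG.apply_swap i j, neg_sq]
  have hchain : chainEnergy G = bondEnergy G 0 1 + bondEnergy G 1 2 + bondEnergy G 2 3 :=
    Fin.sum_univ_three _
  simp only [Matrix.cons_val, Matrix.neg_apply, neg_sq, neg_neg] at hP hQ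
  rw [hsq (.inl 0) (.inr 0), hsq (.inl 2) (.inr 2), hsq (.inl 0) (.inl 1),
    hsq (.inr 1) (.inr 2), hsq (.inl 2) (.inl 3)] at hP
  rw [hsq (.inl 1) (.inr 1), hsq (.inl 3) (.inr 3), hsq (.inr 0) (.inr 1),
    hsq (.inl 1) (.inl 2), hsq (.inr 2) (.inr 3)] at hQ
  linarith [four_mul_bondEnergy_le G 0 1, four_mul_bondEnergy_le G 1 2,
    four_mul_bondEnergy_le G 2 3, cross_polynomial_bound (G (.inl 0) (.inr 0))
      (G (.inl 1) (.inr 1)) (G (.inl 2) (.inr 2)) (G (.inl 3) (.inr 3))]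

end SkewContraction

/-! ### The two-particle ground state -/

section CanonicalAnticommutation

variable {ι A : Type*} [Ring A]

/-- A common right null vector of a family of anticommuting operators, itself encoded as an
operator so that no representation has to be chosen. -/
structure IsVacuum (a : ι → A) (Q : A) : Prop where
  ne_zero : Q ≠ 0
  mul_eq_zero : ∀ i, a i * Q = 0

theorem exists_isVacuum [Algebra ℂ A] [Nontrivial A] [Finite ι] {a : ι → A}
    (ha : ∀ i j, a i * a j + a j * a i = 0) : ∃ Q, IsVacuum a Q := by
  classical
  cases nonempty_fintype ι
  have hself (i : ι) : a i * a i = 0 := by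
    have h : (2 : ℂ) • (a i * a i) = 0 := by rw [two_smul, ha]
    exact (smul_eq_zero.mp h).resolve_left two_ne_zero
  suffices h : ∀ s : Finset ι, ∃ Q : A, Q ≠ 0 ∧ ∀ i ∈ s, a i * Q = 0 by
    obtain ⟨Q, hQ, hall⟩ := h Finset.univ
    exact ⟨Q, hQ, fun i => hall i (Finset.mem_univ i)⟩
  intro s
  induction s using Finset.induction_on with
  | empty => exact ⟨1, one_ne_zero, by simp⟩
  | insert j s _ ih =>
    obtain ⟨Q, hQ, hs⟩ := ih
    rcases eq_or_ne (a j * Q) 0 with hj | hj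
    · exact ⟨Q, hQ, Finset.forall_mem_insert .. |>.mpr ⟨hj, hs⟩⟩
    · refine ⟨a j * Q, hj, Finset.forall_mem_insert .. |>.mpr ⟨?_, fun i hi => ?_⟩⟩
      · rw [← mul_assoc, hself, zero_mul]
      · rw [← mul_assoc, eq_neg_of_add_eq_zero_left (ha i j), neg_mul, mul_assoc, hs i hi,
          mul_zero, neg_zero]

variable [StarRing A]

/-- The canonical anticommutation relations for a family of annihilation operators. -/
structure IsCAR [DecidableEq ι] (a : ι → A) : Prop where
  anticomm : ∀ i j, a i * a j + a j * a i = 0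
  anticomm_star : ∀ i j, a i * star (a j) + star (a j) * a i = if i = j then 1 else 0

/-- The state `a_k† a_l† Q` with particles in the modes `k` and `l` over the vacuum `Q`. -/
def twoParticle (a : ι → A) (Q : A) (k l : ι) : A :=
  star (a k) * (star (a l) * Q)

variable [DecidableEq ι] {a : ι → A} {Q : A}

lemma IsCAR.star_anticomm (ha : IsCAR a) (i j : ι) :
    star (a i) * star (a j) + star (a j) * star (a i) = 0 := by
  rw [← star_mul, ← star_mul, ← star_add, ha.anticomm, star_zero]

lemma IsCAR.twoParticle_swap (ha : IsCAR a) (Q : A) (k l : ι) :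
    twoParticle a Q l k = -twoParticle a Q k l := by
  rw [twoParticle, twoParticle, ← mul_assoc, ← mul_assoc,
    eq_neg_of_add_eq_zero_left (ha.star_anticomm l k), neg_mul]

lemma IsCAR.mul_star_mul (ha : IsCAR a) (i j : ι) (x : A) :
    a i * (star (a j) * x) = (if i = j then x else 0) - star (a j) * (a i * x) := by
  rw [← mul_assoc, eq_sub_of_add_eq (ha.anticomm_star i j), sub_mul, mul_assoc, ite_mul, one_mul,
    zero_mul]

lemma IsCAR.mul_twoParticle (ha : IsCAR a) (hQ : IsVacuum a Q) (j k l : ι) :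
    a j * twoParticle a Q k l
      = (if j = k then star (a l) * Q else 0) - if j = l then star (a k) * Q else 0 := by
  rw [twoParticle, ha.mul_star_mul, ha.mul_star_mul, hQ.mul_eq_zero, mul_zero, sub_zero, mul_ite,
    mul_zero]

lemma IsCAR.star_mul_mul_twoParticle (ha : IsCAR a) (hQ : IsVacuum a Q) (i j k l : ι) :
    star (a i) * a j * twoParticle a Q k l
      = (if j = k then twoParticle a Q i l else 0) + if j = l then twoParticle a Q k i else 0 := by
  rw [mul_assoc, ha.mul_twoParticle hQ, mul_sub, mul_ite, mul_ite, mul_zero, sub_eq_add_neg,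
    ha.twoParticle_swap Q i k, apply_ite Neg.neg, neg_zero]
  rfl

variable [Algebra ℂ A]

lemma IsCAR.twoParticle_self (ha : IsCAR a) (Q : A) (k : ι) : twoParticle a Q k k = 0 := by
  have h : (2 : ℂ) • twoParticle a Q k k = 0 := by
    rw [two_smul]
    exact eq_neg_iff_add_eq_zero.mp (ha.twoParticle_swap Q k k)
  exact (smul_eq_zero.mp h).resolve_left two_ne_zero

lemma IsCAR.number_mul_twoParticle (ha : IsCAR a) (hQ : IsVacuum a Q) (i k l : ι) :
    star (a i) * a i * twoParticle a Q k l
      = ((if i = k then 1 else 0) + if i = l then 1 else 0 : ℂ) • twoParticle a Q k l := by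
  rw [ha.star_mul_mul_twoParticle hQ, add_smul, ite_smul, ite_smul, one_smul, zero_smul]
  congr 1 <;> split_ifs with h <;> simp only [h]

lemma IsCAR.heisenbergBond_mul_twoParticle (ha : IsCAR a) (hQ : IsVacuum a Q) (i j k l : ι) :
    heisenbergBond (a i) (a j) * twoParticle a Q k l
      = -((1 / 2 : ℂ) • ((if j = k then twoParticle a Q i l else 0)
          + (if j = l then twoParticle a Q k i else 0)
          + ((if i = k then twoParticle a Q j l else 0)
          + if i = l then twoParticle a Q k j else 0)))
        - (((if i = k then 1 else 0) + (if i = l then 1 else 0) - 1 / 2)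
          * ((if j = k then 1 else 0) + (if j = l then 1 else 0) - 1 / 2) : ℂ)
          • twoParticle a Q k l := by
  have hnum (i : ι) : (star (a i) * a i - (1 / 2 : ℂ) • 1) * twoParticle a Q k l
      = ((if i = k then 1 else 0) + (if i = l then 1 else 0) - 1 / 2 : ℂ)
        • twoParticle a Q k l := by
    rw [sub_mul, ha.number_mul_twoParticle hQ, smul_mul_assoc, one_mul, sub_smul]
  rw [heisenbergBond, sub_mul, neg_mul, smul_mul_assoc, add_mul,
    ha.star_mul_mul_twoParticle hQ, ha.star_mul_mul_twoParticle hQ, mul_assoc (_ - _), hnum,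
    mul_smul_comm, hnum, smul_smul, mul_comm (_ - _ : ℂ)]

theorem IsMajorana.isCAR {n : ℕ} {c : Fin (2 * n) → Matrix (Fin (2 ^ n)) (Fin (2 ^ n)) ℂ}
    (hc : IsMajorana n c) : IsCAR (ann n c) := by
  let v (z : ℂ) (i : Fin n) : Fin n ⊕ Fin n → ℂ :=
    (1 / 2 : ℂ) • (Pi.single (.inl i) 1 + z • Pi.single (.inr i) 1)
  have hann (i : Fin n) : ann n c i = linearCombination ℂ (majPair n c) (v Complex.I i) := by
    simp [v, ann, majPair_inl, majPair_inr]
  have hstar (i : Fin n) :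
      star (ann n c i) = linearCombination ℂ (majPair n c) (v (-Complex.I) i) := by
    simp [v, hc.star_ann, sub_eq_add_neg]
  have hdot (z w : ℂ) (i j : Fin n) :
      v z i ⬝ᵥ v w j = if i = j then (1 + z * w) / 4 else 0 := by
    rcases eq_or_ne i j with rfl | hij
    · simp only [v, smul_add, dotProduct_add, dotProduct_smul, dotProduct_single, Pi.add_apply,
        Pi.smul_apply, Pi.single_eq_same, Pi.single_eq_of_ne Sum.inl_ne_inr,
        Pi.single_eq_of_ne Sum.inr_ne_inl, smul_eq_mul, if_true]
      ring
    · simp [v, hij, hij.symm]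
  have hd := hc.isClifford_majPair
  constructor <;> intro i j
  · simp [hann, hd.linearCombination_anticomm, hdot]
  · rw [hann, hstar, hd.linearCombination_anticomm, hdot, ite_smul, zero_smul, mul_neg,
      Complex.I_mul_I]
    congr 1
    calc _ = ((1 + - -1) / 4 : ℂ) • (1 + 1 : Matrix (Fin (2 ^ n)) (Fin (2 ^ n)) ℂ) := by
          rw [one_add_one_eq_two]
      _ = 1 := by module

end CanonicalAnticommutation

section GroundState

variable {A : Type*} [Ring A] [StarRing A] [Algebra ℂ A] {a : Fin 4 → A} {Q : A}

lemma IsCAR.heisenbergChain_mul_outer (ha : IsCAR a) (hQ : IsVacuum a Q) :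
    heisenbergChain a * (twoParticle a Q 0 1 + twoParticle a Q 2 3)
      = -((1 / 4 : ℂ) • (twoParticle a Q 0 1 + twoParticle a Q 2 3))
        - (1 / 2 : ℂ) • (twoParticle a Q 0 2 + twoParticle a Q 1 3) := by
  simp only [heisenbergChain_four, add_mul, mul_add, ha.heisenbergBond_mul_twoParticle hQ,
    ha.twoParticle_self, Fin.reduceEq, zero_ne_one, one_ne_zero, if_true, if_false]
  module

lemma IsCAR.heisenbergChain_mul_inner (ha : IsCAR a) (hQ : IsVacuum a Q) :
    heisenbergChain a * (twoParticle a Q 0 3 + twoParticle a Q 1 2)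
      = (1 / 4 : ℂ) • (twoParticle a Q 0 3 + twoParticle a Q 1 2)
        - (twoParticle a Q 0 2 + twoParticle a Q 1 3) := by
  simp only [heisenbergChain_four, add_mul, mul_add, ha.heisenbergBond_mul_twoParticle hQ,
    ha.twoParticle_self, Fin.reduceEq, zero_ne_one, one_ne_zero, if_true, if_false]
  module

lemma IsCAR.heisenbergChain_mul_alternating (ha : IsCAR a) (hQ : IsVacuum a Q) :
    heisenbergChain a * (twoParticle a Q 0 2 + twoParticle a Q 1 3)
      = (3 / 4 : ℂ) • (twoParticle a Q 0 2 + twoParticle a Q 1 3)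
        - (1 / 2 : ℂ) • (twoParticle a Q 0 1 + twoParticle a Q 2 3)
        - (twoParticle a Q 0 3 + twoParticle a Q 1 2) := by
  simp only [heisenbergChain_four, add_mul, mul_add, ha.heisenbergBond_mul_twoParticle hQ,
    ha.twoParticle_self, Fin.reduceEq, zero_ne_one, one_ne_zero, if_true, if_false]
  module

/-- The eigenvector of `heisenbergChain a` in the span of the reflection-symmetric two-particle
states; its coefficients solve the `3 × 3` eigenvalue problem when `s ^ 2 = 3`. -/
def symmetricState (a : Fin 4 → A) (Q : A) (s : ℂ) : A :=
  (twoParticle a Q 0 2 + twoParticle a Q 1 3)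
    + (1 - s) • (twoParticle a Q 0 3 + twoParticle a Q 1 2)
    + (s - 2) • (twoParticle a Q 0 1 + twoParticle a Q 2 3)

lemma IsCAR.heisenbergChain_mul_symmetricState (ha : IsCAR a) (hQ : IsVacuum a Q) {s : ℂ}
    (hs : s ^ 2 = 3) :
    heisenbergChain a * symmetricState a Q s = ((3 + 2 * s) / 4) • symmetricState a Q s := by
  have hinner : (3 + 2 * s) / 4 * (1 - s) = -(3 + s) / 4 := by linear_combination -hs / 2
  have houter : (3 + 2 * s) / 4 * (s - 2) = -s / 4 := by linear_combination hs / 2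
  rw [symmetricState, mul_add, mul_add,
    mul_smul_comm, mul_smul_comm,
    ha.heisenbergChain_mul_outer hQ, ha.heisenbergChain_mul_inner hQ,
    ha.heisenbergChain_mul_alternating hQ, smul_add ((3 + 2 * s) / 4), smul_add ((3 + 2 * s) / 4),
    smul_smul, smul_smul, hinner, houter]
  module

lemma IsCAR.symmetricState_ne_zero (ha : IsCAR a) (hQ : IsVacuum a Q) (s : ℂ) :
    symmetricState a Q s ≠ 0 := by
  have h : a 2 * (a 0 * symmetricState a Q s) = Q := by
    simp [symmetricState, mul_add, ha.mul_twoParticle hQ, ha.mul_star_mul, hQ.mul_eq_zero]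
  intro h0
  rw [h0, mul_zero, mul_zero] at h
  exact hQ.ne_zero h.symm

end GroundState

lemma le_lamMax_of_mul_eq_smul {m : Type} [Fintype m] [DecidableEq m] {M φ : Matrix m m ℂ}
    {x : ℝ} (hφ : φ ≠ 0) (h : M * φ = (x : ℂ) • φ) : x ≤ lamMax M := by
  refine le_csSup (M.finite_spectrum.preimage Complex.ofReal_injective.injOn).bddAbove ?_
  rw [Set.mem_ofPred_eq, spectrum.mem_iff]
  intro hu
  refine hφ (hu.mul_right_eq_zero.mp ?_)
  rw [sub_mul, h, Algebra.algebraMap_eq_smul_one, smul_mul_assoc, one_mul, sub_self]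

theorem IsMajorana.le_lamMax_heisenbergChain
    {c : Fin (2 * 4) → Matrix (Fin (2 ^ 4)) (Fin (2 ^ 4)) ℂ} (hc : IsMajorana 4 c) :
    (3 + 2 * √3) / 4 ≤ lamMax (heisenbergChain (ann 4 c)) := by
  obtain ⟨Q, hQ⟩ := exists_isVacuum hc.isCAR.anticomm
  have hs : ((√3 : ℝ) : ℂ) ^ 2 = 3 := by
    rw [← Complex.ofReal_pow, Real.sq_sqrt zero_le_three, Complex.ofReal_ofNat]
  refine le_lamMax_of_mul_eq_smul (hc.isCAR.symmetricState_ne_zero hQ √3) ?_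
  rw [hc.isCAR.heisenbergChain_mul_symmetricState hQ hs]
  push_cast
  rfl

lemma heisenbergChain_ann_four (c : Fin (2 * 4) → Matrix (Fin (2 ^ 4)) (Fin (2 ^ 4)) ℂ) :
    heisenbergChain (ann 4 c)
      = (-(1 / 2 : ℂ)) • ((ann 4 c 0)ᴴ * ann 4 c 1 + (ann 4 c 1)ᴴ * ann 4 c 0
          + (ann 4 c 1)ᴴ * ann 4 c 2 + (ann 4 c 2)ᴴ * ann 4 c 1
          + (ann 4 c 2)ᴴ * ann 4 c 3 + (ann 4 c 3)ᴴ * ann 4 c 2)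
        + (((1 : ℂ) / 4) • 1 - num 4 c 0 * num 4 c 1)
        + (((1 : ℂ) / 4) • 1 - num 4 c 1 * num 4 c 2)
        + (((1 : ℂ) / 4) • 1 - num 4 c 2 * num 4 c 3)
        + ((1 : ℂ) / 2) • (num 4 c 0 - ((1 : ℂ) / 2) • 1)
        + (num 4 c 1 - ((1 : ℂ) / 2) • 1)
        + (num 4 c 2 - ((1 : ℂ) / 2) • 1)
        + ((1 : ℂ) / 2) • (num 4 c 3 - ((1 : ℂ) / 2) • 1) := by
  simp only [heisenbergChain_four, heisenbergBond_eq, star_eq_conjTranspose, num]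
  module

/-- every fermionic Gaussian state achieves at most a `0.99904` fraction of
the maximal eigenvalue of the 4-mode fermionic Heisenberg-chain Hamiltonian. -/
theorem heisenberg_gaussian_upper_bound
    (c : Fin (2*4) → Matrix (Fin (2^4)) (Fin (2^4)) ℂ) (hc : IsMajorana 4 c)
    (H : Matrix (Fin (2^4)) (Fin (2^4)) ℂ)
    (hH : H = (-(1/2 : ℂ)) • ((ann 4 c 0)ᴴ * ann 4 c 1 + (ann 4 c 1)ᴴ * ann 4 c 0
          + (ann 4 c 1)ᴴ * ann 4 c 2 + (ann 4 c 2)ᴴ * ann 4 c 1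
          + (ann 4 c 2)ᴴ * ann 4 c 3 + (ann 4 c 3)ᴴ * ann 4 c 2)
        + (((1:ℂ)/4) • 1 - num 4 c 0 * num 4 c 1)
        + (((1:ℂ)/4) • 1 - num 4 c 1 * num 4 c 2)
        + (((1:ℂ)/4) • 1 - num 4 c 2 * num 4 c 3)
        + ((1:ℂ)/2) • (num 4 c 0 - ((1:ℂ)/2) • 1)
        + (num 4 c 1 - ((1:ℂ)/2) • 1)
        + (num 4 c 2 - ((1:ℂ)/2) • 1)
        + ((1:ℂ)/2) • (num 4 c 3 - ((1:ℂ)/2) • 1)) :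
    ∀ ρ : Matrix (Fin (2^4)) (Fin (2^4)) ℂ, IsGaussianState 4 c ρ →
      (ρ * H).trace ≤ ((0.99904 * lamMax H : ℝ) : ℂ) := by
  intro ρ hρ
  obtain ⟨htrace, G, hG, hcov⟩ := hρ.exists_hasCovariance hc
  have hchain : H = heisenbergChain (ann 4 c) := hH.trans (heisenbergChain_ann_four c).symm
  have henergy : (ρ * H).trace = chainEnergy G := by
    rw [hchain, hc.trace_mul_heisenbergChain htrace hcov]
  have hsqrt : (1.732 : ℝ) ≤ √3 := Real.le_sqrt_of_sq_le (by norm_num)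
  have hlam : (3 + 2 * √3) / 4 ≤ lamMax H := hchain ▸ hc.le_lamMax_heisenbergChain
  rw [henergy, Complex.real_le_real]
  calc chainEnergy G ≤ 1.6144 := hG.chainEnergy_le
    _ ≤ 0.99904 * lamMax H := by linarith

end
end
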